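/- Identity theorem: Let Ω ⊆ M be a slice domain and let f, g : Ω → 𝔸 be left generalized partial-slice monogenic functions. If there exists ω ∈ 𝕊 such that f = g on some (p+1)-dimensional smooth submanifold contained in Ω_ω, then f = g on all of Ω. -/

import Mathlib

open scoped BigOperators
open Filter Topology

namespace GPSM

variable (A : Type*) [NormedAddCommGroup A] [NormedSpace ℝ A] [Mul A] [One A]

/-- `A` is a real alternative algebra with unit `1`, of finite dimension `d > 1`,
equipped with an anti-involution `conj` (a real-linear map with `(a^c)^c = a`,
`(ab)^c = b^c a^c`, fixing the reals).  The associator is alternating (left/right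
alternative laws). -/
structure IsAltStarAlg (conj : A → A) : Prop where
  finDim : FiniteDimensional ℝ A
  one_lt_finrank : 1 < Module.finrank ℝ A
  mul_add' : ∀ a b c : A, a * (b + c) = a * b + a * c
  add_mul' : ∀ a b c : A, (a + b) * c = a * c + b * c
  smul_mul' : ∀ (r : ℝ) (a b : A), (r • a) * b = r • (a * b)
  mul_smul' : ∀ (r : ℝ) (a b : A), a * (r • b) = r • (a * b)
  one_mul' : ∀ a : A, 1 * a = a
  mul_one' : ∀ a : A, a * 1 = a
  alt_left : ∀ a b : A, a * (a * b) = a * a * b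
  alt_right : ∀ a b : A, a * b * b = a * (b * b)
  conj_add : ∀ a b : A, conj (a + b) = conj a + conj b
  conj_smul : ∀ (r : ℝ) (a : A), conj (r • a) = r • conj a
  conj_conj : ∀ a : A, conj (conj a) = a
  conj_mul : ∀ a b : A, conj (a * b) = conj b * conj a
  conj_one : conj 1 = 1

/-- `v 0, v 1, …, v m` is a hypercomplex basis of the hypercomplex subspace
`M = span(v 0, …, v m)` of `A`: `v 0 = 1`, `t(v s) = 0`, `n(v s) = 1`, the `v s`
anticommute for distinct `s, t ∈ {1,…,m}`, they are linearly independent, and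
`M` is contained in the quadratic cone `Q_A`. -/
structure IsHypBasis (conj : A → A) (v : ℕ → A) (m : ℕ) : Prop where
  v_zero : v 0 = 1
  trace_zero : ∀ s, 1 ≤ s → s ≤ m → v s + conj (v s) = 0
  norm_one : ∀ s, 1 ≤ s → s ≤ m → v s * conj (v s) = 1
  anticomm : ∀ s t, 1 ≤ s → s ≤ m → 1 ≤ t → t ≤ m → s ≠ t → v s * v t = -(v t * v s)
  indep : LinearIndependent ℝ (fun i : Fin (m + 1) => v i)
  mem_cone : ∀ x ∈ Submodule.span ℝ (Set.range fun i : Fin (m + 1) => v (i : ℕ)),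
      ∃ tr nr : ℝ, x + conj x = tr • (1 : A) ∧ x * conj x = nr • (1 : A) ∧
        ((∃ r : ℝ, x = r • (1 : A)) ∨ tr ^ 2 < 4 * nr)

variable {A}

/-- Identification of `ℝ^{m+1}` with the hypercomplex subspace `M`:
`(x_0,…,x_m) ↦ Σ x_s • v s`. -/
def emb (v : ℕ → A) (m : ℕ) (x : Fin (m + 1) → ℝ) : A :=
  ∑ s : Fin (m + 1), x s • v (s : ℕ)

/-- First `p+1` coordinates of a point of `M ≅ ℝ^{m+1}`, i.e. the `x_p`-part. -/
def projP (m p : ℕ) (x : Fin (m + 1) → ℝ) : Fin (p + 1) → ℝ := fun s =>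
  if h : (s : ℕ) < m + 1 then x ⟨(s : ℕ), h⟩ else 0

/-- Inclusion `ℝ^{p+1} ⊆ ℝ^{m+1}` (remaining coordinates `0`). -/
def injP (m p : ℕ) (y : Fin (p + 1) → ℝ) : Fin (m + 1) → ℝ := fun s =>
  if h : (s : ℕ) < p + 1 then y ⟨(s : ℕ), h⟩ else 0

/-- The coordinates of `x_q` (last `q = m - p` coordinates of `x`). -/
def xqpart (m p : ℕ) (x : Fin (m + 1) → ℝ) : Fin (m + 1) → ℝ := fun s =>
  if (s : ℕ) ≤ p then 0 else x s

/-- The coordinates of `x_p` inside `ℝ^{m+1}`. -/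
def xppart (m p : ℕ) (x : Fin (m + 1) → ℝ) : Fin (m + 1) → ℝ := fun s =>
  if (s : ℕ) ≤ p then x s else 0

/-- `r = |x_q|`. -/
noncomputable def rad (m p : ℕ) (x : Fin (m + 1) → ℝ) : ℝ :=
  Real.sqrt (∑ s : Fin (m + 1), (xqpart m p x s) ^ 2)

/-- `ω = x_q / |x_q|` (coordinates), `0` when `x_q = 0`. -/
noncomputable def normq (m p : ℕ) (x : Fin (m + 1) → ℝ) : Fin (m + 1) → ℝ :=
  (rad m p x)⁻¹ • xqpart m p x

/-- The reflection `x = x_p + x_q ↦ x_⋄ = x_p - x_q`. -/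
def reflP (m p : ℕ) (x : Fin (m + 1) → ℝ) : Fin (m + 1) → ℝ := fun s =>
  if (s : ℕ) ≤ p then x s else -x s

/-- The sphere `𝕊 = {x_q ∈ span(v_{p+1},…,v_m) : x_q² = -1}`, in coordinates. -/
def Sph (v : ℕ → A) (m p : ℕ) : Set (Fin (m + 1) → ℝ) :=
  {w | (∀ s : Fin (m + 1), (s : ℕ) ≤ p → w s = 0) ∧ emb v m w * emb v m w = -1}

/-- The point `x_p + r ω` of `M ≅ ℝ^{m+1}`. -/
def pt (m p : ℕ) (w : Fin (m + 1) → ℝ) (y : Fin (p + 1) → ℝ) (r : ℝ) :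
    Fin (m + 1) → ℝ :=
  injP m p y + r • w

/-- The slice `Ω_ω ⊆ ℝ^{p+2}` of `Ω` at `ω`. -/
def sliceSet (m p : ℕ) (Ω : Set (Fin (m + 1) → ℝ)) (w : Fin (m + 1) → ℝ) :
    Set ((Fin (p + 1) → ℝ) × ℝ) := {z | pt m p w z.1 z.2 ∈ Ω}

/-- The restriction `f_ω` of `f` to the slice at `ω`, as a function on `ℝ^{p+2}`. -/
def sliceFun (m p : ℕ) (f : (Fin (m + 1) → ℝ) → A) (w : Fin (m + 1) → ℝ) :
    (Fin (p + 1) → ℝ) × ℝ → A := fun z => f (pt m p w z.1 z.2)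

/-- Partial derivative `∂_{x_s}` of a function on `ℝ^{m+1}`. -/
noncomputable def pdF (m : ℕ) (s : Fin (m + 1)) (f : (Fin (m + 1) → ℝ) → A)
    (x : Fin (m + 1) → ℝ) : A := fderiv ℝ f x (Pi.single s 1)

/-- Partial derivative `∂_{x_s}` of a function on `ℝ^{p+1}`. -/
noncomputable def pdP (p : ℕ) (s : Fin (p + 1)) (g : (Fin (p + 1) → ℝ) → A)
    (y : Fin (p + 1) → ℝ) : A := fderiv ℝ g y (Pi.single s 1)

/-- Partial derivative `∂_{x_s}` of a function on `ℝ^{p+2} = ℝ^{p+1} × ℝ`. -/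
noncomputable def pdSx (p : ℕ) (s : Fin (p + 1)) (G : (Fin (p + 1) → ℝ) × ℝ → A)
    (z : (Fin (p + 1) → ℝ) × ℝ) : A := fderiv ℝ G z (Pi.single s 1, 0)

/-- Partial derivative `∂_r` of a function on `ℝ^{p+2} = ℝ^{p+1} × ℝ`. -/
noncomputable def pdSr (p : ℕ) (G : (Fin (p + 1) → ℝ) × ℝ → A)
    (z : (Fin (p + 1) → ℝ) × ℝ) : A := fderiv ℝ G z (0, 1)

/-- Second partial derivative `∂_r²`. -/
noncomputable def pdSr2 (p : ℕ) (G : (Fin (p + 1) → ℝ) × ℝ → A)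
    (z : (Fin (p + 1) → ℝ) × ℝ) : A := pdSr p (pdSr p G) z

/-- The operator `Σ_{lo ≤ s ≤ hi} v_s ∂_{x_s}` on functions on `ℝ^{m+1}`.
`Dop v m 0 p` is `D_{x_p}`, `Dop v m (p+1) m` is `D_{x_q}`, `Dop v m 0 m` is `D_x`. -/
noncomputable def Dop (v : ℕ → A) (m lo hi : ℕ) (f : (Fin (m + 1) → ℝ) → A)
    (x : Fin (m + 1) → ℝ) : A :=
  ∑ s : Fin (m + 1), if lo ≤ (s : ℕ) ∧ (s : ℕ) ≤ hi then v (s : ℕ) * pdF m s f x else 0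

/-- The conjugate operator `∂_{x_0} - Σ_{1 ≤ s ≤ hi} v_s ∂_{x_s}` on functions on
`ℝ^{m+1}`; `Dbarop v m p` is `D̄_{x_p}`, `Dbarop v m m` is `D̄_x`. -/
noncomputable def Dbarop (v : ℕ → A) (m hi : ℕ) (f : (Fin (m + 1) → ℝ) → A)
    (x : Fin (m + 1) → ℝ) : A :=
  pdF m 0 f x -
    ∑ s : Fin (m + 1), if 1 ≤ (s : ℕ) ∧ (s : ℕ) ≤ hi then v (s : ℕ) * pdF m s f x else 0

/-- The operator `D_{x_p} = Σ_{s=0}^p v_s ∂_{x_s}` on functions on `ℝ^{p+1}`. -/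
noncomputable def DopP (v : ℕ → A) (p : ℕ) (g : (Fin (p + 1) → ℝ) → A)
    (y : Fin (p + 1) → ℝ) : A :=
  ∑ s : Fin (p + 1), v (s : ℕ) * pdP p s g y

/-- The operator `D̄_{x_p} = ∂_{x_0} - Σ_{s=1}^p v_s ∂_{x_s}` on functions on `ℝ^{p+1}`. -/
noncomputable def DbaropP (v : ℕ → A) (p : ℕ) (g : (Fin (p + 1) → ℝ) → A)
    (y : Fin (p + 1) → ℝ) : A :=
  pdP p 0 g y - ∑ s : Fin (p + 1), if 1 ≤ (s : ℕ) then v (s : ℕ) * pdP p s g y else 0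

/-- The operator `D_{x_p}` on functions on `ℝ^{p+2} = ℝ^{p+1} × ℝ`. -/
noncomputable def DopSx (v : ℕ → A) (p : ℕ) (G : (Fin (p + 1) → ℝ) × ℝ → A)
    (z : (Fin (p + 1) → ℝ) × ℝ) : A :=
  ∑ s : Fin (p + 1), v (s : ℕ) * pdSx p s G z

/-- The operator `D̄_{x_p}` on functions on `ℝ^{p+2} = ℝ^{p+1} × ℝ`. -/
noncomputable def DbaropSx (v : ℕ → A) (p : ℕ) (G : (Fin (p + 1) → ℝ) × ℝ → A)
    (z : (Fin (p + 1) → ℝ) × ℝ) : A :=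
  pdSx p 0 G z - ∑ s : Fin (p + 1), if 1 ≤ (s : ℕ) then v (s : ℕ) * pdSx p s G z else 0

/-- The Laplacian `Δ_x` on functions on `ℝ^{m+1}`. -/
noncomputable def lapF (m : ℕ) (f : (Fin (m + 1) → ℝ) → A)
    (x : Fin (m + 1) → ℝ) : A :=
  ∑ s : Fin (m + 1), pdF m s (pdF m s f) x

/-- The Laplacian `Δ_{x_p}` on functions on `ℝ^{p+1}`. -/
noncomputable def lapP (p : ℕ) (g : (Fin (p + 1) → ℝ) → A)
    (y : Fin (p + 1) → ℝ) : A :=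
  ∑ s : Fin (p + 1), pdP p s (pdP p s g) y

/-- Iterated Laplacian `Δ_x^k`. -/
noncomputable def lapIterF (m k : ℕ) (f : (Fin (m + 1) → ℝ) → A) :
    (Fin (m + 1) → ℝ) → A :=
  (fun g => lapF m g)^[k] f

/-- Iterated Laplacian `Δ_{x_p}^k`. -/
noncomputable def lapIterP (p k : ℕ) (g : (Fin (p + 1) → ℝ) → A) :
    (Fin (p + 1) → ℝ) → A :=
  (fun h => lapP p h)^[k] g

/-- The Laplacian `Δ_{x'} = Δ_{x_p} + ∂_r²` on functions on `ℝ^{p+2}`. -/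
noncomputable def lapSx (p : ℕ) (G : (Fin (p + 1) → ℝ) × ℝ → A)
    (z : (Fin (p + 1) → ℝ) × ℝ) : A :=
  (∑ s : Fin (p + 1), pdSx p s (pdSx p s G) z) + pdSr2 p G z

/-- The slice Cauchy-Riemann operator `D_ω = D_{x_p} + ω ∂_r` applied to a function
on `ℝ^{p+2}`, where `ω` is given in coordinates by `w`. -/
noncomputable def DomCR (v : ℕ → A) (m p : ℕ) (w : Fin (m + 1) → ℝ)
    (G : (Fin (p + 1) → ℝ) × ℝ → A) (z : (Fin (p + 1) → ℝ) × ℝ) : A :=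
  DopSx v p G z + emb v m w * pdSr p G z

/-- `f` is left generalized partial-slice monogenic (of type `(p, m-p)`) on `Ω`. -/
def GSM (v : ℕ → A) (m p : ℕ) (f : (Fin (m + 1) → ℝ) → A)
    (Ω : Set (Fin (m + 1) → ℝ)) : Prop :=
  ∀ w ∈ Sph v m p, ContDiffOn ℝ 1 (sliceFun m p f w) (sliceSet m p Ω w) ∧
    ∀ z ∈ sliceSet m p Ω w, DomCR v m p w (sliceFun m p f w) z = 0

/-- `Ω` is partially symmetric with respect to `ℝ^{p+1}`. -/
def PSym (v : ℕ → A) (m p : ℕ) (Ω : Set (Fin (m + 1) → ℝ)) : Prop :=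
  ∀ x ∈ Ω, ∀ w ∈ Sph v m p, xppart m p x + rad m p x • w ∈ Ω

/-- `Ω` is a slice domain: a domain meeting `ℝ^{p+1}` all of whose slices are
domains in `ℝ^{p+2}`. -/
def SliceDomain (v : ℕ → A) (m p : ℕ) (Ω : Set (Fin (m + 1) → ℝ)) : Prop :=
  IsOpen Ω ∧ IsConnected Ω ∧ (∃ x ∈ Ω, xqpart m p x = 0) ∧
    ∀ w ∈ Sph v m p, IsConnected (sliceSet m p Ω w)

/-- The reflection `(x_p, r) ↦ (x_p, -r)` of `ℝ^{p+2}`. -/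
def reflD (p : ℕ) (z : (Fin (p + 1) → ℝ) × ℝ) : (Fin (p + 1) → ℝ) × ℝ := (z.1, -z.2)

/-- The p-symmetric completion `Ω_D ⊆ M` of `D ⊆ ℝ^{p+2}`. -/
def OmegaD (v : ℕ → A) (m p : ℕ) (D : Set ((Fin (p + 1) → ℝ) × ℝ)) :
    Set (Fin (m + 1) → ℝ) :=
  {x | ∃ w ∈ Sph v m p, ∃ z ∈ D, x = pt m p w z.1 z.2}

/-- `(F₁, F₂)` satisfies the even-odd (stem function) conditions on `D`. -/
def IsStem (p : ℕ) (D : Set ((Fin (p + 1) → ℝ) × ℝ))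
    (F₁ F₂ : (Fin (p + 1) → ℝ) × ℝ → A) : Prop :=
  ∀ z ∈ D, F₁ (reflD p z) = F₁ z ∧ F₂ (reflD p z) = -F₂ z

/-- `f` is the generalized partial-slice function induced by the stem `(F₁, F₂)`:
`f(x_p + rω) = F₁(x_p, r) + ω F₂(x_p, r)`. -/
def Induced (v : ℕ → A) (m p : ℕ) (D : Set ((Fin (p + 1) → ℝ) × ℝ))
    (F₁ F₂ : (Fin (p + 1) → ℝ) × ℝ → A) (f : (Fin (m + 1) → ℝ) → A) : Prop :=
  ∀ w ∈ Sph v m p, ∀ z ∈ D, f (pt m p w z.1 z.2) = F₁ z + emb v m w * F₂ z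

/-- The generalized Cauchy-Riemann system for the stem `(F₁, F₂)` on `D`. -/
def StemCR (v : ℕ → A) (p : ℕ) (D : Set ((Fin (p + 1) → ℝ) × ℝ))
    (F₁ F₂ : (Fin (p + 1) → ℝ) × ℝ → A) : Prop :=
  ∀ z ∈ D, DopSx v p F₁ z - pdSr p F₂ z = 0 ∧ DbaropSx v p F₂ z + pdSr p F₁ z = 0

/-- `f` is generalized partial-slice regular on `Ω_D`. -/
def MemGSR (v : ℕ → A) (m p : ℕ) (D : Set ((Fin (p + 1) → ℝ) × ℝ))
    (f : (Fin (m + 1) → ℝ) → A) : Prop :=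
  ∃ F₁ F₂ : (Fin (p + 1) → ℝ) × ℝ → A, IsStem p D F₁ F₂ ∧
    ContDiffOn ℝ 1 F₁ D ∧ ContDiffOn ℝ 1 F₂ D ∧
    Induced v m p D F₁ F₂ f ∧ StemCR v p D F₁ F₂

/-- `f` is a generalized partial-slice function on `Ω`. -/
def MemGS (v : ℕ → A) (m p : ℕ) (Ω : Set (Fin (m + 1) → ℝ))
    (f : (Fin (m + 1) → ℝ) → A) : Prop :=
  ∃ F₁ F₂ : (Fin (p + 1) → ℝ) × ℝ → A,
    (∀ z : (Fin (p + 1) → ℝ) × ℝ, F₁ (reflD p z) = F₁ z ∧ F₂ (reflD p z) = -F₂ z) ∧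
    ∀ x ∈ Ω, f x = F₁ (projP m p x, rad m p x) +
      emb v m (normq m p x) * F₂ (projP m p x, rad m p x)

/-- Non-associative power: `a^n` with products taken from the right. -/
def apow (a : A) (n : ℕ) : A := (fun b => a * b)^[n] 1

/-- Partial even part `PE[f](x) = (f(x) + f(x_⋄))/2`. -/
noncomputable def PE (m p : ℕ) (f : (Fin (m + 1) → ℝ) → A)
    (x : Fin (m + 1) → ℝ) : A := (2 : ℝ)⁻¹ • (f x + f (reflP m p x))

/-- Partial odd part `PO[f](x) = (f(x) - f(x_⋄))/2`. -/
noncomputable def PO (m p : ℕ) (f : (Fin (m + 1) → ℝ) → A)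
    (x : Fin (m + 1) → ℝ) : A := (2 : ℝ)⁻¹ • (f x - f (reflP m p x))

/-- `Ω₀* = {x_p + x_q : x_p ∈ Ω₀, x_q ∈ ℝ^q}`. -/
def Omega0star (m p : ℕ) (Ω₀ : Set (Fin (p + 1) → ℝ)) : Set (Fin (m + 1) → ℝ) :=
  {x | projP m p x ∈ Ω₀}

/-- The spherical derivative `f'_s(x) = (1/2) x_q⁻¹ (f(x) - f(x_⋄))`
(using `x_q⁻¹ = -x_q/|x_q|²`). -/
noncomputable def sder (v : ℕ → A) (m p : ℕ) (f : (Fin (m + 1) → ℝ) → A)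
    (x : Fin (m + 1) → ℝ) : A :=
  -(((2 : ℝ) * rad m p x ^ 2)⁻¹) • (emb v m (xqpart m p x) * (f x - f (reflP m p x)))

/-- The spherical Dirac operator
`Γ f = -(1/2) Σ_{p+1 ≤ i,j ≤ m} v_i (v_j (L_{ij} f))`. -/
noncomputable def sphericalGamma (v : ℕ → A) (m p : ℕ) (f : (Fin (m + 1) → ℝ) → A)
    (x : Fin (m + 1) → ℝ) : A :=
  -((2 : ℝ)⁻¹) • ∑ i : Fin (m + 1), ∑ j : Fin (m + 1),
    if p < (i : ℕ) ∧ p < (j : ℕ) then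
      v (i : ℕ) * (v (j : ℕ) * (x i • pdF m j f x - x j • pdF m i f x)) else 0

/-- The slice Cauchy-Riemann operator `D_ω` applied to (the slice restriction of) a
function `f` on `M`, at the point `x` (with `ω = x_q/|x_q|`). -/
noncomputable def DomCRat (v : ℕ → A) (m p : ℕ) (f : (Fin (m + 1) → ℝ) → A)
    (x : Fin (m + 1) → ℝ) : A :=
  DomCR v m p (normq m p x) (sliceFun m p f (normq m p x)) (projP m p x, rad m p x)

/-- `f` is left monogenic on `Ω`: `f ∈ C¹` and `D_x f = 0`. -/
def Monogenic (v : ℕ → A) (m : ℕ) (f : (Fin (m + 1) → ℝ) → A)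
    (Ω : Set (Fin (m + 1) → ℝ)) : Prop :=
  ContDiffOn ℝ 1 f Ω ∧ ∀ x ∈ Ω, Dop v m 0 m f x = 0

/-- `f` is harmonic on `Ω`: `f ∈ C²` and `Δ_x f = 0`. -/
def Harmonic (m : ℕ) (f : (Fin (m + 1) → ℝ) → A)
    (Ω : Set (Fin (m + 1) → ℝ)) : Prop :=
  ContDiffOn ℝ 2 f Ω ∧ ∀ x ∈ Ω, lapF m f x = 0

/-- A family of functions converges normally (locally a summable uniform bound). -/
def NormallyConvOn {E F : Type*} [TopologicalSpace E] [NormedAddCommGroup F]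
    (u : ℕ → E → F) (s : Set E) : Prop :=
  ∀ x ∈ s, ∃ U ∈ nhds x, ∃ c : ℕ → ℝ, Summable c ∧ ∀ k : ℕ, ∀ y ∈ U, ‖u k y‖ ≤ c k

/-- The generalized partial-slice CK-extension
`CK[f₀](x) = Σ_k (r^{2k}/(2k)!)(-Δ_{x_p})^k f₀(x_p)
  + ω Σ_k (r^{2k+1}/(2k+1)!)(-Δ_{x_p})^k (D_{x_p} f₀)(x_p)`. -/
noncomputable def CKe (v : ℕ → A) (m p : ℕ) (f₀ : (Fin (p + 1) → ℝ) → A)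
    (x : Fin (m + 1) → ℝ) : A :=
  (∑' k : ℕ, (((-1 : ℝ) ^ k * rad m p x ^ (2 * k)) / (2 * k).factorial) •
      lapIterP p k f₀ (projP m p x)) +
  emb v m (normq m p x) *
    ∑' k : ℕ, (((-1 : ℝ) ^ k * rad m p x ^ (2 * k + 1)) / (2 * k + 1).factorial) •
      lapIterP p k (DopP v p f₀) (projP m p x)

/-- The coefficient `Γ(q/2)(-1)^k r^{2k} / (2^{2k} k! Γ(k + q/2))`. -/
noncomputable def hgckC (q k : ℕ) (r : ℝ) : ℝ :=
  (Real.Gamma ((q : ℝ) / 2) * (-1) ^ k * r ^ (2 * k)) /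
    (2 ^ (2 * k) * (k.factorial : ℝ) * Real.Gamma ((k : ℝ) + (q : ℝ) / 2))

/-- The coefficient `Γ(q/2)(-1)^k r^{2k} / (2^{2k+1} k! Γ(k + q/2 + 1))`. -/
noncomputable def gckC' (q k : ℕ) (r : ℝ) : ℝ :=
  (Real.Gamma ((q : ℝ) / 2) * (-1) ^ k * r ^ (2 * k)) /
    (2 ^ (2 * k + 1) * (k.factorial : ℝ) * Real.Gamma ((k : ℝ) + (q : ℝ) / 2 + 1))

/-- The coefficient `Γ(q/2 + 1)(-1)^k r^{2k} / (2^{2k} k! Γ(k + q/2 + 1))`. -/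
noncomputable def hgckC' (q k : ℕ) (r : ℝ) : ℝ :=
  (Real.Gamma ((q : ℝ) / 2 + 1) * (-1) ^ k * r ^ (2 * k)) /
    (2 ^ (2 * k) * (k.factorial : ℝ) * Real.Gamma ((k : ℝ) + (q : ℝ) / 2 + 1))

/-- The monogenic generalized CK-extension `GCK[A₀]`. -/
noncomputable def GCKe (v : ℕ → A) (m p : ℕ) (A₀ : (Fin (p + 1) → ℝ) → A)
    (x : Fin (m + 1) → ℝ) : A :=
  (∑' k : ℕ, hgckC (m - p) k (rad m p x) • lapIterP p k A₀ (projP m p x)) +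
  emb v m (xqpart m p x) *
    ∑' k : ℕ, gckC' (m - p) k (rad m p x) • lapIterP p k (DopP v p A₀) (projP m p x)

/-- The harmonic generalized CK-extension `HGCK[A₀, A₁]`. -/
noncomputable def HGCKe (v : ℕ → A) (m p : ℕ) (A₀ A₁ : (Fin (p + 1) → ℝ) → A)
    (x : Fin (m + 1) → ℝ) : A :=
  (∑' k : ℕ, hgckC (m - p) k (rad m p x) • lapIterP p k A₀ (projP m p x)) +
  emb v m (xqpart m p x) *
    ∑' k : ℕ, hgckC' (m - p) k (rad m p x) • lapIterP p k A₁ (projP m p x)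

/-- The operator `(1/r)∂_r`, extended to `r = 0` by its limit `∂_r²` (on even
functions). -/
noncomputable def T1 (p : ℕ) (G : (Fin (p + 1) → ℝ) × ℝ → A) :
    (Fin (p + 1) → ℝ) × ℝ → A := fun z =>
  if z.2 = 0 then pdSr2 p G z else (z.2)⁻¹ • pdSr p G z

/-- The operator `∂_r ∘ (1/r)`, extended to `r = 0` by its limit `(1/2)∂_r²` (on odd
functions). -/
noncomputable def T2 (p : ℕ) (G : (Fin (p + 1) → ℝ) × ℝ → A) :
    (Fin (p + 1) → ℝ) × ℝ → A := fun z =>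
  if z.2 = 0 then (2 : ℝ)⁻¹ • pdSr2 p G z
  else fderiv ℝ (fun t : ℝ => t⁻¹ • G (z.1, t)) z.2 1

/-- `C_q(k) = (q-1)(q-3)⋯(q-2k+1)`, `C_q(0) = 1`. -/
noncomputable def cq (q k : ℕ) : ℝ :=
  ∏ i ∈ Finset.range k, ((q : ℝ) - (2 * (i : ℝ) + 1))

/-- Double factorial. -/
def dfac : ℕ → ℕ
  | 0 => 1
  | 1 => 1
  | n + 2 => (n + 2) * dfac n

/-- The Fueter-Sce constant `γ_q = (-1)^{(q-1)/2} (q-1)!!/(q-2)!!`. -/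
noncomputable def gammaQ (q : ℕ) : ℝ :=
  (-1 : ℝ) ^ ((q - 1) / 2) * (dfac (q - 1) : ℝ) / (dfac (q - 2) : ℝ)


section Core
open MeasureTheory Module

/-- regularised Cauchy kernel -/
noncomputable def kerC {ι : Type*} [Fintype ι] (c : ℝ) (i : ι) (y : EuclideanSpace ℝ ι) : ℝ :=
  y i * (1 + c ^ 2 * ‖y‖ ^ 2) ^ (-(Fintype.card ι : ℝ) / 2)

noncomputable def kerC' {ι : Type*} [Fintype ι] [DecidableEq ι] (c : ℝ) (i j : ι)
    (y : EuclideanSpace ℝ ι) : ℝ :=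
  (if i = j then (1 + c ^ 2 * ‖y‖ ^ 2) ^ (-(Fintype.card ι : ℝ) / 2) else 0)
   - (Fintype.card ι : ℝ) * c ^ 2 * (y i * y j) * (1 + c ^ 2 * ‖y‖ ^ 2) ^ (-(Fintype.card ι : ℝ) / 2 - 1)

lemma kerC_diff {ι : Type*} [Fintype ι] [DecidableEq ι] (c : ℝ) (i : ι)
    (y : EuclideanSpace ℝ ι) :
    DifferentiableAt ℝ (kerC c i) y ∧ ∀ j, fderiv ℝ (kerC c i) y (EuclideanSpace.single j 1) = kerC' c i j y := by
  have hpos : 0 < 1 + c ^ 2 * ‖y‖ ^ 2 := by positivity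
  have h1 : HasFDerivAt (fun y : EuclideanSpace ℝ ι => 1 + c ^ 2 * ‖y‖ ^ 2)
      (c ^ 2 • (2 • (innerSL ℝ y))) y := by
    have := ((hasStrictFDerivAt_norm_sq y).hasFDerivAt.const_mul (c ^ 2)).const_add 1
    exact this
  have h2 := h1.rpow_const (p := -(Fintype.card ι : ℝ) / 2) (Or.inl hpos.ne')
  have h3 : HasFDerivAt (fun y : EuclideanSpace ℝ ι => y i) (EuclideanSpace.proj (𝕜 := ℝ) i : EuclideanSpace ℝ ι →L[ℝ] ℝ) y :=
    (EuclideanSpace.proj (𝕜 := ℝ) i : EuclideanSpace ℝ ι →L[ℝ] ℝ).hasFDerivAt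
  have h4 := h3.mul h2
  have h5 : HasFDerivAt (kerC c i) _ y := h4
  refine ⟨h5.differentiableAt, fun j => ?_⟩
  rw [h5.fderiv]
  simp [kerC', EuclideanSpace.inner_single_right]
  split_ifs <;> ring

lemma kerC_cont {ι : Type*} [Fintype ι] (c : ℝ) (i : ι) :
    Continuous (kerC c i : EuclideanSpace ℝ ι → ℝ) := by
  unfold kerC
  refine Continuous.mul (by fun_prop) (Continuous.rpow_const (by fun_prop) fun y => Or.inl ?_)
  positivity

lemma kerC'_cont {ι : Type*} [Fintype ι] [DecidableEq ι] (c : ℝ) (i j : ι) :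
    Continuous (kerC' c i j : EuclideanSpace ℝ ι → ℝ) := by
  unfold kerC'
  have h : ∀ a : ℝ, Continuous fun y : EuclideanSpace ℝ ι => (1 + c ^ 2 * ‖y‖ ^ 2) ^ a := fun a =>
    Continuous.rpow_const (by fun_prop) fun y => Or.inl (by positivity)
  refine Continuous.sub ?_ (Continuous.mul (by fun_prop) (h _))
  split_ifs
  · exact h _
  · fun_prop

variable {ι : Type*} [Fintype ι] [DecidableEq ι]
  {V : Type*} [NormedAddCommGroup V] [NormedSpace ℝ V]

/-- Dirac operator -/
noncomputable def dir (e : ι → V →L[ℝ] V) (F : EuclideanSpace ℝ ι → V) (x : EuclideanSpace ℝ ι) : V :=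
  ∑ i, e i (fderiv ℝ F x (EuclideanSpace.single i 1))

def Cliff (e b : ι → V →L[ℝ] V) : Prop :=
  ∀ i j a, b i (e j a) + b j (e i a) = if i = j then (2 : ℝ) • a else 0

lemma cliff_sum {e b : ι → V →L[ℝ] V} (h : Cliff e b) (M : ι → ι → ℝ) (hM : ∀ i j, M i j = M j i) (a : V) :
    ∑ i, ∑ j, M i j • b i (e j a) = (∑ i, M i i) • a := by
  have h1 : ∑ i, ∑ j, M i j • b i (e j a) = ∑ i, ∑ j, M i j • b j (e i a) := by
    rw [Finset.sum_comm]
    simp_rw [fun i j => hM j i]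
  have h2 : (2 : ℝ) • ∑ i, ∑ j, M i j • b i (e j a) = (2 : ℝ) • (∑ i, M i i) • a := by
    rw [two_smul]
    nth_rewrite 2 [h1]
    simp_rw [← Finset.sum_add_distrib, ← smul_add, h _ _ a]
    simp [Finset.sum_smul, Finset.smul_sum]
    refine Finset.sum_congr rfl fun i _ => ?_
    rw [smul_comm]
  exact smul_right_injective V (two_ne_zero) h2

lemma kerC'_sum {e b : ι → V →L[ℝ] V} (h : Cliff e b) (c : ℝ) (y : EuclideanSpace ℝ ι) (a : V) :
    ∑ i, ∑ j, kerC' c i j y • b i (e j a) =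
      ((Fintype.card ι : ℝ) * (1 + c ^ 2 * ‖y‖ ^ 2) ^ (-((Fintype.card ι : ℝ) + 2) / 2)) • a := by
  rw [cliff_sum h]
  · congr 1
    have hpos : 0 < 1 + c ^ 2 * ‖y‖ ^ 2 := by positivity
    simp only [kerC', if_true, Finset.sum_sub_distrib]
    rw [← Finset.sum_mul, ← Finset.mul_sum]
    have : ∑ i, y i * y i = ‖y‖ ^ 2 := by
      rw [EuclideanSpace.norm_sq_eq]; simp [sq]
    rw [this]
    have e1 : (-((Fintype.card ι : ℝ) + 2) / 2) = -(Fintype.card ι : ℝ) / 2 - 1 := by ring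
    rw [e1, Real.rpow_sub_one hpos.ne']
    simp
    field_simp
    ring
  · intro i j
    simp only [kerC', eq_comm, mul_comm]

lemma byparts [FiniteDimensional ℝ V] {e b : ι → V →L[ℝ] V} (h : Cliff e b) {u : EuclideanSpace ℝ ι → V}
    (hu : ContDiff ℝ 1 u) (hc : HasCompactSupport u) (c : ℝ) :
    ∫ y, ∑ i, kerC c i y • b i (dir e u y) =
      - ∫ y, ((Fintype.card ι : ℝ) * (1 + c ^ 2 * ‖y‖ ^ 2) ^ (-((Fintype.card ι : ℝ) + 2) / 2)) • u y := by
  have hcd : Continuous (fderiv ℝ u) := hu.continuous_fderiv (by norm_num)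
  have hcs : HasCompactSupport (fderiv ℝ u) := hc.fderiv ℝ
  have hcs' : ∀ v, HasCompactSupport (fun y => fderiv ℝ u y v) := fun v =>
    hcs.comp_left (g := fun L : EuclideanSpace ℝ ι →L[ℝ] V => L v) (by simp)
  have I1 : ∀ i j, Integrable (fun y => kerC c i y • fderiv ℝ u y (EuclideanSpace.single j 1)) := by
    intro i j
    refine Continuous.integrable_of_hasCompactSupport ?_ (hcs' _).smul_left
    exact (kerC_cont c i).smul (hcd.clm_apply continuous_const)
  have I2 : ∀ i j, Integrable (fun y => kerC' c i j y • u y) := by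
    intro i j
    exact Continuous.integrable_of_hasCompactSupport ((kerC'_cont c i j).smul hu.continuous) hc.smul_left
  have I3 : ∀ i, Integrable (fun y => kerC c i y • u y) := by
    intro i
    exact Continuous.integrable_of_hasCompactSupport ((kerC_cont c i).smul hu.continuous) hc.smul_left
  have key : ∀ i j, ∫ y, kerC c i y • fderiv ℝ u y (EuclideanSpace.single j 1) = - ∫ y, kerC' c i j y • u y := by
    intro i j
    have := integral_smul_fderiv_eq_neg_fderiv_smul_of_integrable (μ := volume) (𝕜 := ℝ) (f := kerC c i) (g := u)
      (v := EuclideanSpace.single j 1) (by simpa only [(kerC_diff c i _).2 j] using I2 i j) (I1 i j) (I3 i)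
      (fun x _ => (kerC_diff c i x).1) (fun x _ => hu.differentiable (by norm_num) x)
    simpa only [(kerC_diff c i _).2 j] using this
  have L : ∀ y, ∑ i, kerC c i y • b i (dir e u y) =
      ∑ i, ∑ j, (b i ∘L e j) (kerC c i y • fderiv ℝ u y (EuclideanSpace.single j 1)) := by
    intro y
    simp [dir, Finset.smul_sum]
  have R : ∀ y, ((Fintype.card ι : ℝ) * (1 + c ^ 2 * ‖y‖ ^ 2) ^ (-((Fintype.card ι : ℝ) + 2) / 2)) • u y =
      ∑ i, ∑ j, (b i ∘L e j) (kerC' c i j y • u y) := by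
    intro y
    rw [← kerC'_sum h]
    simp
  simp_rw [L, R]
  rw [integral_finsetSum _ fun i _ => integrable_finsetSum _ fun j _ => ContinuousLinearMap.integrable_comp _ (I1 i j),
    integral_finsetSum _ fun i _ => integrable_finsetSum _ fun j _ => ContinuousLinearMap.integrable_comp _ (I2 i j),
    ← Finset.sum_neg_distrib]
  refine Finset.sum_congr rfl fun i _ => ?_
  rw [integral_finsetSum _ fun j _ => ContinuousLinearMap.integrable_comp _ (I1 i j),
    integral_finsetSum _ fun j _ => ContinuousLinearMap.integrable_comp _ (I2 i j),
    ← Finset.sum_neg_distrib]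
  refine Finset.sum_congr rfl fun j _ => ?_
  rw [ContinuousLinearMap.integral_comp_comm _ (I1 i j), ContinuousLinearMap.integral_comp_comm _ (I2 i j), key]
  simp

end Core

section Core2
set_option linter.unusedSectionVars false
open MeasureTheory Module

noncomputable def ker0 {ι : Type*} [Fintype ι] (i : ι) (y : EuclideanSpace ℝ ι) : ℝ :=
  y i * (‖y‖ ^ 2) ^ (-(Fintype.card ι : ℝ) / 2)

lemma scale_rpow (n : ℕ) {c s : ℝ} (hc : 0 < c) (hs : 0 ≤ s) :
    c ^ n * (1 + c ^ 2 * s) ^ (-(n : ℝ) / 2) = ((c ^ 2)⁻¹ + s) ^ (-(n : ℝ) / 2) := by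
  have h1 : 1 + c ^ 2 * s = c ^ 2 * ((c ^ 2)⁻¹ + s) := by field_simp
  rw [h1, Real.mul_rpow (by positivity) (by positivity), ← mul_assoc]
  have h2 : (c ^ 2) ^ (-(n : ℝ) / 2) = (c ^ n)⁻¹ := by
    rw [← Real.rpow_natCast c 2, ← Real.rpow_mul hc.le, ← Real.rpow_natCast c n, ← Real.rpow_neg hc.le]
    congr 1; push_cast; ring
  rw [h2, mul_inv_cancel₀ (by positivity), one_mul]

variable {ι : Type*} [Fintype ι] [DecidableEq ι]
  {V : Type*} [NormedAddCommGroup V] [NormedSpace ℝ V]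

noncomputable def Qk (ι : Type*) [Fintype ι] (y : EuclideanSpace ℝ ι) : ℝ :=
  (1 + ‖y‖ ^ 2) ^ (-((Fintype.card ι : ℝ) + 2) / 2)

lemma Qk_pos (y : EuclideanSpace ℝ ι) : 0 < Qk ι y := by unfold Qk; positivity

lemma Qk_int : Integrable (Qk ι) := by
  unfold Qk
  apply integrable_rpow_neg_one_add_norm_sq
  simp

lemma Qk_cont : Continuous (Qk ι) := by
  unfold Qk
  exact Continuous.rpow_const (by fun_prop) fun y => Or.inl (by positivity)

lemma Qk_ipos : 0 < ∫ y, Qk ι y := by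
  rw [integral_pos_iff_support_of_nonneg (fun y => (Qk_pos y).le) Qk_int]
  have : Function.support (Qk ι) = Set.univ := by
    ext y; simp [(Qk_pos y).ne']
  rw [this]
  exact (isOpen_univ.measure_pos volume ⟨0, trivial⟩)

lemma Qk_decay : Tendsto (fun x : EuclideanSpace ℝ ι => ‖x‖ ^ finrank ℝ (EuclideanSpace ℝ ι) * Qk ι x)
    (Bornology.cobounded _) (𝓝 0) := by
  have h1 : Tendsto (fun x : EuclideanSpace ℝ ι => (‖x‖ ^ 2)⁻¹) (Bornology.cobounded _) (𝓝 0) := by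
    apply Tendsto.inv_tendsto_atTop
    exact (tendsto_pow_atTop two_ne_zero).comp tendsto_norm_cobounded_atTop
  refine squeeze_zero' (Eventually.of_forall fun x => by have := Qk_pos x; positivity) ?_ h1
  filter_upwards [tendsto_norm_cobounded_atTop.eventually (eventually_gt_atTop 0)] with x hx
  rw [finrank_euclideanSpace]
  have h2 : Qk ι x ≤ (‖x‖ ^ 2) ^ (-((Fintype.card ι : ℝ) + 2) / 2) := by
    unfold Qk
    apply Real.rpow_le_rpow_of_nonpos (by positivity) (by linarith)
    have : (0 : ℝ) ≤ Fintype.card ι := by positivity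
    linarith
  calc _ ≤ ‖x‖ ^ (Fintype.card ι) * (‖x‖ ^ 2) ^ (-((Fintype.card ι : ℝ) + 2) / 2) := by gcongr
    _ = (‖x‖ ^ 2)⁻¹ := by
      rw [← Real.rpow_natCast ‖x‖ 2, ← Real.rpow_mul hx.le, ← Real.rpow_natCast ‖x‖ _, ← Real.rpow_neg hx.le,
        ← Real.rpow_add hx]
      congr 1; push_cast; ring

lemma lim_right [FiniteDimensional ℝ V] {u : EuclideanSpace ℝ ι → V}
    (hu : Continuous u) (hc : HasCompactSupport u) :
    Tendsto (fun c : ℝ => (c ^ (Fintype.card ι)) • ∫ y, ((Fintype.card ι : ℝ) * (1 + c ^ 2 * ‖y‖ ^ 2) ^ (-((Fintype.card ι : ℝ) + 2) / 2)) • u y)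
     atTop (𝓝 (((Fintype.card ι : ℝ) * ∫ y, Qk ι y) • u 0)) := by
  obtain ⟨I, hI⟩ : ∃ I, I = ∫ y, Qk ι y := ⟨_, rfl⟩
  have hIp : 0 < I := hI ▸ Qk_ipos
  rw [← hI]
  have h1 : ∫ y, I⁻¹ * Qk ι y = 1 := by
    rw [integral_const_mul, ← hI]; field_simp
  have h2 : Tendsto (fun x : EuclideanSpace ℝ ι => ‖x‖ ^ finrank ℝ (EuclideanSpace ℝ ι) * (I⁻¹ * Qk ι x))
    (Bornology.cobounded _) (𝓝 0) := by
    have := (Qk_decay (ι := ι)).const_mul I⁻¹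
    rw [mul_zero] at this
    refine this.congr fun x => by ring
  have h3 := tendsto_integral_comp_smul_smul_of_integrable (μ := volume) (φ := fun y => I⁻¹ * Qk ι y) (g := u)
    (fun x => by have := Qk_pos x; positivity) h1 h2 (hu.integrable_of_hasCompactSupport hc) hu.continuousAt
  have h4 := h3.const_smul ((Fintype.card ι : ℝ) * I)
  refine h4.congr fun c => ?_
  rw [← integral_smul, ← integral_smul]
  refine integral_congr_ae (Eventually.of_forall fun y => ?_)
  simp only []
  rw [smul_smul, smul_smul, finrank_euclideanSpace]
  congr 1
  simp only [Qk, norm_smul, mul_pow, Real.norm_eq_abs, sq_abs]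
  generalize (1 + c ^ 2 * ‖y‖ ^ 2) ^ (-((Fintype.card ι : ℝ) + 2) / 2) = X
  field_simp

lemma dir_cs {e : ι → V →L[ℝ] V} {u : EuclideanSpace ℝ ι → V}
    (hu : ContDiff ℝ 1 u) (hc : HasCompactSupport u) :
    Continuous (dir e u) ∧ HasCompactSupport (dir e u) := by
  have hcd : Continuous (fderiv ℝ u) := hu.continuous_fderiv (by norm_num)
  refine ⟨?_, ?_⟩
  · unfold dir
    exact continuous_finsetSum _ fun i _ => (e i).continuous.comp (hcd.clm_apply continuous_const)
  · exact (hc.fderiv ℝ).comp_left (g := fun L : EuclideanSpace ℝ ι →L[ℝ] V => ∑ i, e i (L (EuclideanSpace.single i 1))) (by simp)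

lemma repr0 [FiniteDimensional ℝ V] {e b : ι → V →L[ℝ] V} (h : Cliff e b) {u : EuclideanSpace ℝ ι → V}
    (hu : ContDiff ℝ 1 u) (hc : HasCompactSupport u) {δ : ℝ} (hδ : 0 < δ)
    (hz : ∀ y, ‖y‖ < δ → dir e u y = 0) :
    ((Fintype.card ι : ℝ) * ∫ y, Qk ι y) • u 0 = - ∫ y, ∑ i, ker0 i y • b i (dir e u y) := by
  obtain ⟨hdc, hds⟩ := dir_cs (e := e) hu hc
  have h1 := lim_right hu.continuous hc
  have h2 : Tendsto (fun c : ℝ => ∫ y, ∑ i, (c ^ (Fintype.card ι) * kerC c i y) • b i (dir e u y)) atTop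
      (𝓝 (∫ y, ∑ i, ker0 i y • b i (dir e u y))) := by
    apply tendsto_integral_filter_of_dominated_convergence
      (fun y => ∑ i, (‖y‖ * (δ ^ 2) ^ (-(Fintype.card ι : ℝ) / 2)) * ‖b i (dir e u y)‖)
    · refine Eventually.of_forall fun c => Continuous.aestronglyMeasurable ?_
      exact continuous_finsetSum _ fun i _ => (continuous_const.mul (kerC_cont c i)).smul ((b i).continuous.comp hdc)
    · filter_upwards [eventually_gt_atTop 0] with c hcp
      refine Eventually.of_forall fun y => ?_
      refine (norm_sum_le _ _).trans (Finset.sum_le_sum fun i _ => ?_)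
      rw [norm_smul]
      rcases lt_or_ge ‖y‖ δ with hy | hy
      · simp [hz y hy]
      · gcongr
        unfold kerC
        rw [mul_left_comm, scale_rpow _ hcp (by positivity), norm_mul]
        have hcc : (0 : ℝ) < (c ^ 2)⁻¹ := by positivity
        gcongr
        · exact PiLp.norm_apply_le y i
        · rw [Real.norm_of_nonneg (by positivity)]
          apply Real.rpow_le_rpow_of_nonpos (by positivity)
          · have : δ ^ 2 ≤ ‖y‖ ^ 2 := by gcongr
            linarith
          · have : (0 : ℝ) ≤ Fintype.card ι := by positivity
            linarith
    · refine Continuous.integrable_of_hasCompactSupport ?_ ?_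
      · exact continuous_finsetSum _ fun i _ => (by fun_prop : Continuous fun y : EuclideanSpace ℝ ι => ‖y‖ * (δ ^ 2) ^ (-(Fintype.card ι : ℝ) / 2)).mul ((b i).continuous.comp hdc).norm
      · refine hds.mono fun y hy => ?_
        contrapose! hy
        simp only [Function.mem_support, not_not] at hy ⊢
        simp [hy]
    · refine Eventually.of_forall fun y => ?_
      refine tendsto_finsetSum _ fun i _ => ?_
      rcases lt_or_ge ‖y‖ δ with hy | hy
      · simp [hz y hy]
      · refine Tendsto.smul_const ?_ _
        unfold kerC ker0
        have : Tendsto (fun c : ℝ => y i * ((c ^ 2)⁻¹ + ‖y‖ ^ 2) ^ (-(Fintype.card ι : ℝ) / 2)) atTop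
           (𝓝 (y i * (0 + ‖y‖ ^ 2) ^ (-(Fintype.card ι : ℝ) / 2))) := by
          refine Tendsto.const_mul _ (Tendsto.rpow_const ?_ (Or.inl ?_))
          · exact (tendsto_pow_atTop two_ne_zero).inv_tendsto_atTop.add_const _
          · have := hδ.trans_le hy
            positivity
        rw [zero_add] at this
        refine this.congr' ?_
        filter_upwards [eventually_gt_atTop 0] with c hcp
        rw [mul_left_comm, scale_rpow _ hcp (by positivity)]
  have h3 : ∀ c : ℝ, ∫ y, ∑ i, (c ^ (Fintype.card ι) * kerC c i y) • b i (dir e u y) =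
     - ((c ^ (Fintype.card ι)) • ∫ y, ((Fintype.card ι : ℝ) * (1 + c ^ 2 * ‖y‖ ^ 2) ^ (-((Fintype.card ι : ℝ) + 2) / 2)) • u y) := by
    intro c
    rw [← smul_neg, ← byparts h hu hc c, ← integral_smul]
    simp_rw [Finset.smul_sum, smul_smul]
  simp_rw [h3] at h2
  rw [tendsto_nhds_unique h2 h1.neg, neg_neg]

lemma repr1 [FiniteDimensional ℝ V] {e b : ι → V →L[ℝ] V} (h : Cliff e b) {u : EuclideanSpace ℝ ι → V}
    (hu : ContDiff ℝ 1 u) (hc : HasCompactSupport u) {δ : ℝ} (hδ : 0 < δ) (x : EuclideanSpace ℝ ι)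
    (hz : ∀ y, ‖y - x‖ < δ → dir e u y = 0) :
    ((Fintype.card ι : ℝ) * ∫ y, Qk ι y) • u x = - ∫ y, ∑ i, ker0 i (y - x) • b i (dir e u y) := by
  have hd : ∀ y, dir e (fun y => u (y + x)) y = dir e u (y + x) := by
    intro y
    simp only [dir, fderiv_comp_add_right]
  have := repr0 h (u := fun y => u (y + x)) (hu.comp (by fun_prop))
    (hc.comp_homeomorph (Homeomorph.addRight x)) hδ (by
      intro y hy
      rw [hd]
      exact hz _ (by simpa using hy))
  simp only [hd, zero_add] at this
  rw [this, ← integral_add_right_eq_self (fun y => ∑ i, ker0 i (y - x) • b i (dir e u y)) x]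
  simp

end Core2

section Core3
set_option linter.unusedSectionVars false
open MeasureTheory Module

variable {ι : Type*} [Fintype ι] [DecidableEq ι]

noncomputable def qz (ξ Y : EuclideanSpace ℝ ι) (z : ℂ) : ℂ :=
  (‖Y‖ ^ 2 : ℝ) - 2 * z * (inner ℝ Y ξ : ℝ) + z ^ 2 * (‖ξ‖ ^ 2 : ℝ)

lemma qz_slit {ξ Y : EuclideanSpace ℝ ι} {z : ℂ} {δ : ℝ} (hδ : 0 < δ) (hY : δ ≤ ‖Y‖) (hz : ‖z‖ * ‖ξ‖ ≤ δ / 4) :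
    qz ξ Y z ∈ Complex.slitPlane := by
  left
  have h1 : ‖2 * z * (inner ℝ Y ξ : ℝ)‖ ≤ 2 * ‖Y‖ * (δ / 4) := by
    rw [norm_mul, norm_mul, Complex.norm_real]
    have := abs_real_inner_le_norm Y ξ
    calc ‖(2 : ℂ)‖ * ‖z‖ * ‖(inner ℝ Y ξ : ℝ)‖ ≤ 2 * ‖z‖ * (‖Y‖ * ‖ξ‖) := by
          simp only [Complex.norm_ofNat, Real.norm_eq_abs]; gcongr
      _ = 2 * ‖Y‖ * (‖z‖ * ‖ξ‖) := by ring
      _ ≤ _ := by gcongr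
  have h2 : ‖z ^ 2 * (‖ξ‖ ^ 2 : ℝ)‖ ≤ (δ / 4) ^ 2 := by
    rw [norm_mul, Complex.norm_real, norm_pow, Real.norm_of_nonneg (by positivity), ← mul_pow]
    gcongr
  have h3 := (Complex.abs_re_le_norm _).trans h1
  have h4 := (Complex.abs_re_le_norm _).trans h2
  rw [abs_le] at h3 h4
  simp only [qz, Complex.add_re, Complex.sub_re, Complex.ofReal_re]
  nlinarith

noncomputable def Kz (ξ Y : EuclideanSpace ℝ ι) (i : ι) (z : ℂ) : ℂ :=
  ((Y i : ℝ) - z * (ξ i : ℝ)) * (qz ξ Y z) ^ (-(Fintype.card ι : ℂ) / 2)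

noncomputable def Kz' (ξ Y : EuclideanSpace ℝ ι) (i : ι) (z : ℂ) : ℂ :=
  (-(ξ i : ℝ)) * (qz ξ Y z) ^ (-(Fintype.card ι : ℂ) / 2) +
  ((Y i : ℝ) - z * (ξ i : ℝ)) * ((-(Fintype.card ι : ℂ) / 2) * (qz ξ Y z) ^ (-(Fintype.card ι : ℂ) / 2 - 1) *
    (- 2 * (inner ℝ Y ξ : ℝ) + 2 * z * (‖ξ‖ ^ 2 : ℝ)))

lemma Kz_deriv {ξ Y : EuclideanSpace ℝ ι} {z : ℂ} (i : ι) (h : qz ξ Y z ∈ Complex.slitPlane) :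
    HasDerivAt (Kz ξ Y i) (Kz' ξ Y i z) z := by
  have h1 : HasDerivAt (qz ξ Y) (- 2 * (inner ℝ Y ξ : ℝ) + 2 * z * (‖ξ‖ ^ 2 : ℝ)) z := by
    have := (((hasDerivAt_id z).const_mul 2).mul_const ((inner ℝ Y ξ : ℝ) : ℂ)).const_sub ((‖Y‖ ^ 2 : ℝ) : ℂ)
    have := this.add (((hasDerivAt_id z).pow 2).mul_const ((‖ξ‖ ^ 2 : ℝ) : ℂ))
    exact this.congr_deriv (by simp)
  have h2 := h1.cpow_const (c := -(Fintype.card ι : ℂ) / 2) h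
  have h3 : HasDerivAt (fun z : ℂ => ((Y i : ℝ) : ℂ) - z * (ξ i : ℝ)) (-(ξ i : ℝ)) z := by
    simpa using ((hasDerivAt_id z).mul_const ((ξ i : ℝ) : ℂ)).const_sub ((Y i : ℝ) : ℂ)
  exact h3.mul h2

lemma Kz_real (ξ Y : EuclideanSpace ℝ ι) (i : ι) (t : ℝ) :
    Kz ξ Y i t = (ker0 i (Y - t • ξ) : ℝ) := by
  have h : qz ξ Y t = ((‖Y - t • ξ‖ ^ 2 : ℝ) : ℂ) := by
    rw [norm_sub_sq_real, norm_smul, inner_smul_right, mul_pow, Real.norm_eq_abs, sq_abs, qz]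
    push_cast
    ring
  unfold Kz ker0
  rw [h]
  push_cast
  rw [Complex.ofReal_cpow (by positivity)]
  push_cast
  simp

lemma qz_cont (ξ x0 : EuclideanSpace ℝ ι) : Continuous fun p : ℂ × EuclideanSpace ℝ ι => qz ξ (p.2 - x0) p.1 := by
  unfold qz
  have : Continuous fun p : ℂ × EuclideanSpace ℝ ι => (inner ℝ (p.2 - x0) ξ : ℝ) :=
    Continuous.inner (by fun_prop) (by fun_prop)
  fun_prop

lemma Kz_contOn (ξ x0 : EuclideanSpace ℝ ι) (i : ι) {S : Set (ℂ × EuclideanSpace ℝ ι)}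
    (hS : ∀ p ∈ S, qz ξ (p.2 - x0) p.1 ∈ Complex.slitPlane) :
    ContinuousOn (fun p : ℂ × EuclideanSpace ℝ ι => Kz ξ (p.2 - x0) i p.1) S ∧
    ContinuousOn (fun p : ℂ × EuclideanSpace ℝ ι => Kz' ξ (p.2 - x0) i p.1) S := by
  have h1 : ∀ s : ℂ, ContinuousOn (fun p : ℂ × EuclideanSpace ℝ ι => (qz ξ (p.2 - x0) p.1) ^ s) S := fun s =>
    (qz_cont ξ x0).continuousOn.cpow continuousOn_const hS
  have : Continuous fun p : ℂ × EuclideanSpace ℝ ι => (inner ℝ (p.2 - x0) ξ : ℝ) :=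
    Continuous.inner (by fun_prop) (by fun_prop)
  have h2 : Continuous fun p : ℂ × EuclideanSpace ℝ ι => (((p.2 - x0) i : ℝ) : ℂ) - p.1 * (ξ i : ℝ) := by
    fun_prop
  have h3 : Continuous fun p : ℂ × EuclideanSpace ℝ ι => (- 2 * ((inner ℝ (p.2 - x0) ξ : ℝ) : ℂ) + 2 * p.1 * (‖ξ‖ ^ 2 : ℝ)) := by
    fun_prop
  refine ⟨h2.continuousOn.mul (h1 _), ?_⟩
  unfold Kz'
  refine ContinuousOn.add (continuousOn_const.mul (h1 _)) (h2.continuousOn.mul ((continuousOn_const.mul (h1 _)).mul h3.continuousOn))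

lemma Kz_meas (ξ x0 : EuclideanSpace ℝ ι) (i : ι) (z : ℂ) :
    Measurable (fun y : EuclideanSpace ℝ ι => Kz ξ (y - x0) i z) ∧
    Measurable (fun y : EuclideanSpace ℝ ι => Kz' ξ (y - x0) i z) := by
  have h0 : Measurable fun y : EuclideanSpace ℝ ι => qz ξ (y - x0) z :=
    ((qz_cont ξ x0).comp (by fun_prop : Continuous fun y : EuclideanSpace ℝ ι => (z, y))).measurable
  have : Continuous fun y : EuclideanSpace ℝ ι => (inner ℝ (y - x0) ξ : ℝ) :=
    Continuous.inner (by fun_prop) (by fun_prop)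
  have h2 : Measurable fun y : EuclideanSpace ℝ ι => (((y - x0) i : ℝ) : ℂ) - z * (ξ i : ℝ) :=
    Continuous.measurable (by fun_prop)
  have h3 : Measurable fun y : EuclideanSpace ℝ ι => (- 2 * ((inner ℝ (y - x0) ξ : ℝ) : ℂ) + 2 * z * (‖ξ‖ ^ 2 : ℝ)) :=
    Continuous.measurable (by fun_prop)
  refine ⟨h2.mul (h0.pow_const _), ?_⟩
  unfold Kz'
  exact ((h0.pow_const _).const_mul _).add (h2.mul (((h0.pow_const _).const_mul _).mul h3))

lemma ana {a : ι → EuclideanSpace ℝ ι → ℝ} (hac : ∀ i, Continuous (a i)) (has : ∀ i, HasCompactSupport (a i))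
    (ξ x0 : EuclideanSpace ℝ ι) {δ : ℝ} (hδ : 0 < δ) (ha0 : ∀ i y, ‖y - x0‖ < δ → a i y = 0) :
    AnalyticAt ℝ (fun t : ℝ => ∫ y, ∑ i, ker0 i (y - (x0 + t • ξ)) * a i y) 0 := by
  obtain ⟨r, hr, hrξ⟩ : ∃ r : ℝ, 0 < r ∧ r * ‖ξ‖ ≤ δ / 4 := by
    refine ⟨δ / 4 / (‖ξ‖ + 1), by positivity, ?_⟩
    rw [div_mul_eq_mul_div, div_le_iff₀ (by positivity)]
    nlinarith [norm_nonneg ξ]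
  set S : Set (EuclideanSpace ℝ ι) := (⋃ i, tsupport (a i)) \ Metric.ball x0 δ with hS
  have hSc : IsCompact S := (isCompact_iUnion fun i => has i).diff Metric.isOpen_ball
  have hSout : ∀ y, y ∉ S → ∀ i, a i y = 0 := by
    intro y hy i
    by_contra hne
    apply hy
    refine ⟨Set.mem_iUnion.2 ⟨i, subset_tsupport _ hne⟩, fun hb => hne (ha0 i y ?_)⟩
    simpa [dist_eq_norm] using hb
  have hslit : ∀ p ∈ Metric.closedBall (0 : ℂ) r ×ˢ S, qz ξ (p.2 - x0) p.1 ∈ Complex.slitPlane := by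
    rintro ⟨z, y⟩ ⟨hz, hy⟩
    refine qz_slit hδ ?_ ?_
    · have := hy.2
      simpa [dist_eq_norm] using this
    · have : ‖z‖ ≤ r := by simpa using hz
      exact (mul_le_mul_of_nonneg_right this (norm_nonneg _)).trans hrξ
  have hcomp : IsCompact (Metric.closedBall (0 : ℂ) r ×ˢ S) := (isCompact_closedBall _ _).prod hSc
  set F : ℂ → EuclideanSpace ℝ ι → ℂ := fun z y => ∑ i, Kz ξ (y - x0) i z * (a i y : ℝ) with hF
  set F' : ℂ → EuclideanSpace ℝ ι → ℂ := fun z y => ∑ i, Kz' ξ (y - x0) i z * (a i y : ℝ) with hF'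
  have hacC : ∀ i, Continuous fun p : ℂ × EuclideanSpace ℝ ι => ((a i p.2 : ℝ) : ℂ) := fun i =>
    Complex.continuous_ofReal.comp ((hac i).comp continuous_snd)
  obtain ⟨C, hC⟩ := hcomp.exists_bound_of_continuousOn (f := fun p => F p.1 p.2)
    (continuousOn_finsetSum _ fun i _ => (Kz_contOn ξ x0 i hslit).1.mul (hacC i).continuousOn)
  obtain ⟨C', hC'⟩ := hcomp.exists_bound_of_continuousOn (f := fun p => F' p.1 p.2)
    (continuousOn_finsetSum _ fun i _ => (Kz_contOn ξ x0 i hslit).2.mul (hacC i).continuousOn)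
  have hFm : ∀ z, Measurable (F z) := fun z =>
    Finset.measurable_sum _ fun i _ => (Kz_meas ξ x0 i z).1.mul (Complex.measurable_ofReal.comp (hac i).measurable)
  have hFm' : ∀ z, Measurable (F' z) := fun z =>
    Finset.measurable_sum _ fun i _ => (Kz_meas ξ x0 i z).2.mul (Complex.measurable_ofReal.comp (hac i).measurable)
  have hFout : ∀ y, y ∉ S → ∀ z, F z y = 0 := fun y hy z => by simp [hF, hSout y hy]
  have hFout' : ∀ y, y ∉ S → ∀ z, F' z y = 0 := fun y hy z => by simp [hF', hSout y hy]
  have hind : ∀ C : ℝ, Integrable (S.indicator fun _ => C) := fun C =>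
    (integrable_indicator_iff hSc.measurableSet).2 (integrableOn_const hSc.measure_ne_top)
  have hbd : ∀ z ∈ Metric.ball (0 : ℂ) r, ∀ y, ‖F z y‖ ≤ S.indicator (fun _ => C) y := by
    intro z hz y
    by_cases hy : y ∈ S
    · rw [Set.indicator_of_mem hy]
      exact hC (z, y) ⟨Metric.ball_subset_closedBall hz, hy⟩
    · simp [hFout y hy, hy]
  have hbd' : ∀ z ∈ Metric.ball (0 : ℂ) r, ∀ y, ‖F' z y‖ ≤ S.indicator (fun _ => C') y := by
    intro z hz y
    by_cases hy : y ∈ S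
    · rw [Set.indicator_of_mem hy]
      exact hC' (z, y) ⟨Metric.ball_subset_closedBall hz, hy⟩
    · simp [hFout' y hy, hy]
  have hdiff : ∀ y, ∀ z ∈ Metric.ball (0 : ℂ) r, HasDerivAt (fun z => F z y) (F' z y) z := by
    intro y z hz
    by_cases hy : y ∈ S
    · exact HasDerivAt.fun_sum fun i _ =>
        (Kz_deriv i (hslit (z, y) ⟨Metric.ball_subset_closedBall hz, hy⟩)).mul_const _
    · simp only [hFout y hy, hFout' y hy]
      exact hasDerivAt_const _ _
  have hG : DifferentiableOn ℂ (fun z => ∫ y, F z y) (Metric.ball 0 r) := by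
    intro z hz
    have := (hasDerivAt_integral_of_dominated_loc_of_deriv_le (μ := volume) (F := F) (F' := F') (x₀ := z) (Metric.isOpen_ball.mem_nhds hz)
      (Eventually.of_forall fun z => (hFm z).aestronglyMeasurable)
      ((hind C).mono' (hFm z).aestronglyMeasurable (Eventually.of_forall (hbd z hz)))
      (hFm' z).aestronglyMeasurable (Eventually.of_forall fun y z hz => hbd' z hz y) (hind C')
      (Eventually.of_forall hdiff)).2
    exact this.differentiableAt.differentiableWithinAt
  have hGa : AnalyticAt ℂ (fun z => ∫ y, F z y) 0 := hG.analyticAt (Metric.ball_mem_nhds _ hr)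
  have h1 : AnalyticAt ℝ (fun z => ∫ y, F z y) ((0 : ℝ) : ℂ) := by
    simpa using hGa.restrictScalars (𝕜 := ℝ)
  have h2 : AnalyticAt ℝ (fun t : ℝ => ∫ y, F (t : ℂ) y) 0 :=
    h1.comp (f := fun t : ℝ => (t : ℂ)) (Complex.ofRealCLM.analyticAt 0)
  have h3 : AnalyticAt ℝ (fun t : ℝ => (∫ y, F (t : ℂ) y).re) 0 :=
    (Complex.reCLM.analyticAt _).comp (f := fun t : ℝ => ∫ y, F (t : ℂ) y) h2
  convert h3 using 2 with t
  have : ∀ y, F (t : ℂ) y = ((∑ i, ker0 i (y - (x0 + t • ξ)) * a i y : ℝ) : ℂ) := by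
    intro y
    simp only [hF, Kz_real, sub_sub]
    push_cast
    rfl
  simp_rw [this]
  rw [integral_complex_ofReal]
  simp

end Core3

section Core4
set_option linter.unusedSectionVars false
open MeasureTheory Module

variable {ι : Type*} [Fintype ι] [DecidableEq ι]
  {V : Type*} [NormedAddCommGroup V] [NormedSpace ℝ V]

lemma ker0_int {h : EuclideanSpace ℝ ι → V} (hdc : Continuous h) (hds : HasCompactSupport h)
   {δ : ℝ} (hδ : 0 < δ) (x : EuclideanSpace ℝ ι)
    (hz : ∀ y, ‖y - x‖ < δ → h y = 0) (i : ι) :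
    Integrable fun y => ker0 i (y - x) • h y := by
  refine Integrable.mono' (g := fun y => (‖y - x‖ * (δ ^ 2) ^ (-(Fintype.card ι : ℝ) / 2)) * ‖h y‖) ?_ ?_ ?_
  · refine Continuous.integrable_of_hasCompactSupport ?_ ?_
    · fun_prop
    · refine hds.mono fun y hy => ?_
      contrapose! hy
      simp only [Function.mem_support, not_not] at hy ⊢
      simp [hy]
  · refine AEStronglyMeasurable.smul ?_ hdc.aestronglyMeasurable
    refine Measurable.aestronglyMeasurable ?_
    unfold ker0
    have h1 : Measurable fun y : EuclideanSpace ℝ ι => (y - x) i := Continuous.measurable (by fun_prop)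
    have h2 : Measurable fun y : EuclideanSpace ℝ ι => ‖y - x‖ ^ 2 := Continuous.measurable (by fun_prop)
    exact h1.mul (h2.pow_const _)
  · refine Eventually.of_forall fun y => ?_
    rw [norm_smul]
    rcases lt_or_ge ‖y - x‖ δ with hy | hy
    · simp [hz y hy]
    · gcongr
      unfold ker0
      rw [norm_mul]
      gcongr
      · exact PiLp.norm_apply_le (y - x) i
      · rw [Real.norm_of_nonneg (by positivity)]
        apply Real.rpow_le_rpow_of_nonpos (by positivity)
        · gcongr
        · have : (0 : ℝ) ≤ Fintype.card ι := by positivity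
          linarith

lemma line_ana [Nonempty ι] [FiniteDimensional ℝ V] {e b : ι → V →L[ℝ] V} (h : Cliff e b)
    {F : EuclideanSpace ℝ ι → V} {Ω : Set (EuclideanSpace ℝ ι)} (hΩ : IsOpen Ω)
    (hF : ContDiffOn ℝ 1 F Ω) (hD : ∀ x ∈ Ω, dir e F x = 0)
    {x0 : EuclideanSpace ℝ ι} (hx0 : x0 ∈ Ω) (ξ : EuclideanSpace ℝ ι) (l : V →L[ℝ] ℝ) :
    AnalyticAt ℝ (fun t : ℝ => l (F (x0 + t • ξ))) 0 := by
  obtain ⟨R, hR, hRΩ⟩ := Metric.nhds_basis_closedBall.mem_iff.1 (hΩ.mem_nhds hx0)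
  let χ : ContDiffBump x0 := ⟨R / 2, R, by positivity, by linarith⟩
  set u : EuclideanSpace ℝ ι → V := fun y => χ y • F y with hu
  have hχs : tsupport χ = Metric.closedBall x0 R := χ.tsupport_eq
  have hucs : HasCompactSupport u := χ.hasCompactSupport.smul_right
  have huc : ContDiff ℝ 1 u := by
    rw [contDiff_iff_contDiffAt]
    intro y
    by_cases hy : y ∈ Ω
    · exact χ.contDiff.contDiffAt.smul (hF.contDiffAt (hΩ.mem_nhds hy))
    · have : y ∉ tsupport χ := fun h => hy (hRΩ (hχs ▸ h))
      have h0 : u =ᶠ[𝓝 y] fun _ => 0 := by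
        filter_upwards [notMem_tsupport_iff_eventuallyEq.1 this] with z hz
        simp [hu, hz]
      exact contDiffAt_const.congr_of_eventuallyEq h0
  have hueq : ∀ y, ‖y - x0‖ < R / 2 → u y = F y := by
    intro y hy
    have : χ y = 1 := χ.one_of_mem_closedBall (by
      simp only [Metric.mem_closedBall, dist_eq_norm]; exact hy.le)
    simp [hu, this]
  have hdu : ∀ y, ‖y - x0‖ < R / 2 → dir e u y = 0 := by
    intro y hy
    have hyΩ : y ∈ Ω := hRΩ (by simp only [Metric.mem_closedBall, dist_eq_norm]; linarith)
    rw [← hD y hyΩ]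
    have : u =ᶠ[𝓝 y] F := by
      have ho : IsOpen {y | ‖y - x0‖ < R / 2} := isOpen_lt (by fun_prop) (by fun_prop)
      filter_upwards [ho.mem_nhds hy] with z hz using hueq z hz
    simp only [dir, this.fderiv_eq]
  obtain ⟨hdc, hds⟩ := dir_cs (e := e) huc hucs
  set K : ℝ := (Fintype.card ι : ℝ) * ∫ y, Qk ι y with hK
  have hKpos : 0 < K := mul_pos (by exact_mod_cast Fintype.card_pos) Qk_ipos
  have hA := ana (a := fun i y => l (b i (dir e u y))) (fun i => by fun_prop)
    (fun i => hds.comp_left (g := fun w => l (b i w)) (by simp)) ξ x0 (half_pos hR)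
    (fun i y hy => by simp [hdu y hy])
  have hA2 := (hA.neg).const_smul (c := K⁻¹)
  refine hA2.congr ?_
  have hev : ∀ᶠ t : ℝ in 𝓝 0, ‖t • ξ‖ < R / 4 := by
    have : Continuous fun t : ℝ => ‖t • ξ‖ := by fun_prop
    exact this.continuousAt.eventually (gt_mem_nhds (by simpa using (by positivity : 0 < R / 4)))
  filter_upwards [hev] with t ht
  have hz : ∀ y, ‖y - (x0 + t • ξ)‖ < R / 4 → dir e u y = 0 := by
    intro y hy
    apply hdu
    calc ‖y - x0‖ = ‖(y - (x0 + t • ξ)) + t • ξ‖ := by congr 1; abel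
      _ ≤ _ := norm_add_le _ _
      _ < R / 2 := by linarith
  have h1 := repr1 h huc hucs (by positivity : 0 < R / 4) (x0 + t • ξ) hz
  have h2 := congrArg l h1
  rw [map_smul, map_neg, ← ContinuousLinearMap.integral_comp_comm, hueq] at h2
  · simp only [map_sum, map_smul, smul_eq_mul] at h2
    simp only [Pi.smul_apply, Pi.neg_apply, smul_eq_mul]
    rw [← h2, ← hK]
    field_simp
  · simp only [add_sub_cancel_left]; linarith
  · refine integrable_finsetSum _ fun i _ => ?_
    exact ker0_int (by fun_prop) (hds.comp_left (g := fun w => b i w) (by simp)) (by positivity : 0 < R / 4) _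
      (fun y hy => by simp [hz y hy]) i

lemma ucp_ball [Nonempty ι] [FiniteDimensional ℝ V] {e b : ι → V →L[ℝ] V} (h : Cliff e b)
    {F : EuclideanSpace ℝ ι → V} {x0 : EuclideanSpace ℝ ι} {R : ℝ}
    (hF : ContDiffOn ℝ 1 F (Metric.ball x0 R)) (hD : ∀ x ∈ Metric.ball x0 R, dir e F x = 0)
    {a : EuclideanSpace ℝ ι} (ha : a ∈ Metric.ball x0 R) (hFa : F =ᶠ[𝓝 a] 0) :
    ∀ x ∈ Metric.ball x0 R, F x = 0 := by
  intro x hx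
  refine (SeparatingDual.eq_zero_iff_forall_dual_eq_zero (R := ℝ) (F x)).2 fun l => ?_
  set T : Set ℝ := {t | a + t • (x - a) ∈ Metric.ball x0 R} with hT
  have hTc : Convex ℝ T := by
    intro s hs t ht c d hc hd hcd
    have h1 := convex_ball x0 R hs ht hc hd hcd
    change a + (c • s + d • t) • (x - a) ∈ Metric.ball x0 R
    convert h1 using 1
    have hc1 : c = 1 - d := by linarith
    subst hc1
    module
  have hana : AnalyticOnNhd ℝ (fun t : ℝ => l (F (a + t • (x - a)))) T := by
    intro t ht
    have h1 := line_ana h Metric.isOpen_ball hF hD ht (x - a) l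
    have h2 : AnalyticAt ℝ (fun s : ℝ => l (F (a + t • (x - a) + (s - t) • (x - a)))) t := by
      refine AnalyticAt.comp (f := fun s : ℝ => s - t) (g := fun s : ℝ => l (F (a + t • (x - a) + s • (x - a)))) ?_ (by fun_prop)
      simpa using h1
    refine h2.congr (Eventually.of_forall fun s => ?_)
    simp only []
    congr 2
    rw [add_assoc, ← add_smul]
    congr 2
    ring
  have h0 : (fun t : ℝ => l (F (a + t • (x - a)))) =ᶠ[𝓝 0] 0 := by
    have : Tendsto (fun t : ℝ => a + t • (x - a)) (𝓝 0) (𝓝 a) := by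
      have : Continuous (fun t : ℝ => a + t • (x - a)) := by fun_prop
      simpa using this.tendsto 0
    filter_upwards [this.eventually hFa] with t ht
    simp [ht]
  have := hana.eqOn_zero_of_preconnected_of_eventuallyEq_zero hTc.isPreconnected (z₀ := 0) (by simpa [hT] using ha) h0
    (x := 1) (by simpa [hT] using hx)
  simpa using this

lemma ucp [Nonempty ι] [FiniteDimensional ℝ V] {e b : ι → V →L[ℝ] V} (h : Cliff e b)
    {F : EuclideanSpace ℝ ι → V} {Ω : Set (EuclideanSpace ℝ ι)} (hΩ : IsOpen Ω) (hcon : IsPreconnected Ω)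
    (hF : ContDiffOn ℝ 1 F Ω) (hD : ∀ x ∈ Ω, dir e F x = 0)
    {a : EuclideanSpace ℝ ι} (ha : a ∈ Ω) (hFa : F =ᶠ[𝓝 a] 0) :
    ∀ x ∈ Ω, F x = 0 := by
  set Z : Set (EuclideanSpace ℝ ι) := {x | F =ᶠ[𝓝 x] 0} with hZ
  have hZo : IsOpen Z := isOpen_setOfPred_eventually_nhds
  have hsub : Ω ⊆ Z := by
    refine hcon.subset_of_closure_inter_subset hZo ⟨a, ha, hFa⟩ ?_
    rintro x ⟨hxc, hxΩ⟩
    obtain ⟨R, hR, hRΩ⟩ := Metric.isOpen_iff.1 hΩ x hxΩ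
    obtain ⟨y, hy, hyx⟩ := mem_closure_iff_nhds.1 hxc _ (Metric.ball_mem_nhds x hR)
    have := ucp_ball h (hF.mono hRΩ) (fun z hz => hD z (hRΩ hz)) hy hyx
    filter_upwards [Metric.ball_mem_nhds x hR] with z hz using this z hz
  exact fun x hx => (hsub hx).self_of_nhds

end Core4

section Core5
set_option linter.unusedSectionVars false
open MeasureTheory Module

variable {ι : Type*} [Fintype ι] [DecidableEq ι]
  {V : Type*} [NormedAddCommGroup V] [NormedSpace ℝ V]
  {W : Type*} [NormedAddCommGroup W] [NormedSpace ℝ W] [FiniteDimensional ℝ W]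

lemma normal_exists (L : W →L[ℝ] EuclideanSpace ℝ ι) (hL : Function.Injective L)
    (hd : finrank ℝ W + 1 = Fintype.card ι) :
    ∃ ν : EuclideanSpace ℝ ι, ν ≠ 0 ∧ (∀ w, inner ℝ ν (L w) = 0) ∧
      ∀ x, inner ℝ ν x = 0 → ∃ w, L w = x := by
  set S : Submodule ℝ (EuclideanSpace ℝ ι) := LinearMap.range (L : W →ₗ[ℝ] EuclideanSpace ℝ ι) with hS
  have h1 : finrank ℝ S = finrank ℝ W := LinearMap.finrank_range_of_inj hL
  have h2 := Submodule.finrank_add_finrank_orthogonal S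
  rw [finrank_euclideanSpace] at h2
  have h3 : finrank ℝ Sᗮ = 1 := by omega
  obtain ⟨ν, hν, hsp⟩ := finrank_eq_one_iff'.1 h3
  refine ⟨ν, by simpa using hν, fun w => ?_, fun x hx => ?_⟩
  · rw [real_inner_comm]
    exact ν.2 _ ⟨w, rfl⟩
  · have : x ∈ Sᗮᗮ := by
      intro y hy
      obtain ⟨c, hc⟩ := hsp ⟨y, hy⟩
      have hc' : c • (ν : EuclideanSpace ℝ ι) = y := by simpa using congrArg Subtype.val hc
      rw [← hc', inner_smul_left, hx, mul_zero]
    rw [Submodule.orthogonal_orthogonal] at this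
    exact this

lemma grad_zero {e b : ι → V →L[ℝ] V} (h : Cliff e b) (D : EuclideanSpace ℝ ι →L[ℝ] V)
    {ν : EuclideanSpace ℝ ι} (hν : ν ≠ 0) (hker : ∀ x, inner ℝ ν x = 0 → D x = 0)
    (hsum : ∑ i, e i (D (EuclideanSpace.single i 1)) = 0) : D = 0 := by
  have hc : (inner ℝ ν ν : ℝ) ≠ 0 := by simpa using hν
  have hx : ∀ x, (inner ℝ ν ν : ℝ) • D x = (inner ℝ ν x : ℝ) • D ν := by
    intro x
    have := hker ((inner ℝ ν ν : ℝ) • x - (inner ℝ ν x : ℝ) • ν) (by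
      rw [inner_sub_right, inner_smul_right, inner_smul_right]; ring)
    rw [map_sub, map_smul, map_smul, sub_eq_zero] at this
    exact this
  have h1 : ∑ i, ν i • e i (D ν) = 0 := by
    have : (inner ℝ ν ν : ℝ) • ∑ i, e i (D (EuclideanSpace.single i 1)) = 0 := by rw [hsum, smul_zero]
    rw [Finset.smul_sum] at this
    rw [← this]
    refine Finset.sum_congr rfl fun i _ => ?_
    rw [← ContinuousLinearMap.map_smul (e i) (inner ℝ ν ν : ℝ), hx, map_smul]
    simp [EuclideanSpace.inner_single_right]
  have h2 : ∑ j, ∑ i, (ν j * ν i) • b j (e i (D ν)) = 0 := by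
    have : ∀ j, ∑ i, (ν j * ν i) • b j (e i (D ν)) = ν j • b j (∑ i, ν i • e i (D ν)) := by
      intro j
      simp only [map_sum, map_smul, Finset.smul_sum, smul_smul]
    simp [this, h1]
  have h3 := cliff_sum h (fun i j => ν i * ν j) (fun i j => mul_comm _ _) (D ν)
  rw [h2] at h3
  have h4 : ∑ i, ν i * ν i = (inner ℝ ν ν : ℝ) := by
    rw [PiLp.inner_apply]
    rfl
  rw [h4] at h3
  have h5 : D ν = 0 := (smul_eq_zero.1 h3.symm).resolve_left hc
  ext1 x
  have := hx x
  rw [h5, smul_zero] at this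
  simpa using (smul_eq_zero.1 this).resolve_left hc

lemma hyp_grad {e b : ι → V →L[ℝ] V} (h : Cliff e b)
    {F : EuclideanSpace ℝ ι → V} {φ : W → EuclideanSpace ℝ ι} {u : W}
    (hd : finrank ℝ W + 1 = Fintype.card ι)
    (hφ : DifferentiableAt ℝ φ u) (hinj : Function.Injective (fderiv ℝ φ u))
    (hF : DifferentiableAt ℝ F (φ u)) (h0 : ∀ᶠ z in 𝓝 u, F (φ z) = 0)
    (hD : dir e F (φ u) = 0) : fderiv ℝ F (φ u) = 0 := by
  obtain ⟨ν, hν, -, hr⟩ := normal_exists _ hinj hd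
  refine grad_zero h _ hν (fun x hx => ?_) hD
  obtain ⟨z, rfl⟩ := hr x hx
  have h1 := (hF.hasFDerivAt.comp u hφ.hasFDerivAt).fderiv
  have h2 : fderiv ℝ (F ∘ φ) u = 0 := by
    have : (F ∘ φ) =ᶠ[𝓝 u] fun _ => 0 := h0
    rw [this.fderiv_eq]; simp
  rw [h2] at h1
  simpa using (congrArg (fun T => T z) h1).symm

lemma straighten {φ : W → EuclideanSpace ℝ ι} {u0 : W}
    (hd : finrank ℝ W + 1 = Fintype.card ι)
    (hφ : ContDiffAt ℝ 1 φ u0) (hinj : Function.Injective (fderiv ℝ φ u0)) :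
    ∃ (P : OpenPartialHomeomorph (W × ℝ) (EuclideanSpace ℝ ι)) , (u0, (0:ℝ)) ∈ P.source ∧
      ∀ u, P (u, 0) = φ u := by
  obtain ⟨ν, hν, ho, hr⟩ := normal_exists _ hinj hd
  set L : W × ℝ →L[ℝ] EuclideanSpace ℝ ι :=
    (fderiv ℝ φ u0).comp (ContinuousLinearMap.fst ℝ W ℝ) +
      (ContinuousLinearMap.snd ℝ W ℝ).smulRight ν with hL
  have hLi : Function.Injective L := by
    rw [injective_iff_map_eq_zero]
    rintro ⟨a, t⟩ hat
    have hat' : fderiv ℝ φ u0 a + t • ν = 0 := by simpa [hL] using hat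
    have h1 := congrArg (fun x => (inner ℝ ν x : ℝ)) hat'
    simp only [inner_add_right, ho, inner_smul_right, zero_add, inner_zero_right, mul_eq_zero,
      inner_self_eq_zero, hν, or_false] at h1
    rw [h1, zero_smul, add_zero] at hat'
    rw [h1, (injective_iff_map_eq_zero _).1 hinj a hat']
    rfl
  have hfr : finrank ℝ (W × ℝ) = finrank ℝ (EuclideanSpace ℝ ι) := by
    rw [finrank_prod, finrank_self, finrank_euclideanSpace, hd]
  let T : (W × ℝ) ≃L[ℝ] EuclideanSpace ℝ ι :=
    (LinearEquiv.ofInjectiveOfFinrankEq (L : W × ℝ →ₗ[ℝ] EuclideanSpace ℝ ι) hLi hfr).toContinuousLinearEquiv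
  have hT : (T : W × ℝ →L[ℝ] EuclideanSpace ℝ ι) = L := by
    exact ContinuousLinearMap.ext fun x => rfl
  have hΦ : HasStrictFDerivAt (fun z : W × ℝ => φ z.1 + z.2 • ν) (T : W × ℝ →L[ℝ] EuclideanSpace ℝ ι) (u0, (0:ℝ)) := by
    rw [hT, hL]
    have h1 : HasStrictFDerivAt φ (fderiv ℝ φ u0) ((u0, (0:ℝ)) : W × ℝ).1 :=
      hφ.hasStrictFDerivAt (by simp)
    exact (h1.comp (u0, (0:ℝ)) hasStrictFDerivAt_fst).add
      ((hasStrictFDerivAt_snd (𝕜 := ℝ) (E := W) (F := ℝ) (p := (u0, (0:ℝ)))).smul_const ν)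
  refine ⟨hΦ.toOpenPartialHomeomorph _, hΦ.mem_toOpenPartialHomeomorph_source, fun u => ?_⟩
  rw [hΦ.toOpenPartialHomeomorph_coe]
  simp

lemma hyp_lemma [Nonempty ι] [FiniteDimensional ℝ V] {e b : ι → V →L[ℝ] V} (h : Cliff e b)
    {F : EuclideanSpace ℝ ι → V} {Ω : Set (EuclideanSpace ℝ ι)} (hΩ : IsOpen Ω) (hcon : IsPreconnected Ω)
    (hF : ContDiffOn ℝ 1 F Ω) (hD : ∀ x ∈ Ω, dir e F x = 0)
    (hd : finrank ℝ W + 1 = Fintype.card ι) {U : Set W} (hU : IsOpen U) (hUne : U.Nonempty)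
    {φ : W → EuclideanSpace ℝ ι} (hφ : ContDiffOn ℝ 1 φ U)
    (hinj : ∀ u ∈ U, Function.Injective (fderiv ℝ φ u)) (hsub : ∀ u ∈ U, φ u ∈ Ω)
    (h0 : ∀ u ∈ U, F (φ u) = 0) : ∀ x ∈ Ω, F x = 0 := by
  obtain ⟨u0, hu0⟩ := hUne
  have hFd : ∀ x ∈ Ω, DifferentiableAt ℝ F x := fun x hx =>
    (hF.contDiffAt (hΩ.mem_nhds hx)).differentiableAt (by simp)
  have hgrad : ∀ u ∈ U, fderiv ℝ F (φ u) = 0 := fun u hu =>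
    hyp_grad h hd ((hφ.contDiffAt (hU.mem_nhds hu)).differentiableAt (by simp)) (hinj u hu)
      (hFd _ (hsub u hu)) (by filter_upwards [hU.mem_nhds hu] with z hz using h0 z hz) (hD _ (hsub u hu))
  obtain ⟨P, hP0, hPφ⟩ := straighten hd (hφ.contDiffAt (hU.mem_nhds hu0)) (hinj u0 hu0)
  have hz0 : φ u0 ∈ P.target := by rw [← hPφ]; exact P.map_source hP0
  have hsymm0 : P.symm (φ u0) = (u0, 0) := by rw [← hPφ, P.left_inv hP0]
  have hcs : ContinuousAt P.symm (φ u0) := P.symm.continuousAt hz0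
  have hN : ∀ᶠ x in 𝓝 (φ u0), x ∈ P.target ∧ x ∈ Ω ∧ (P.symm x).1 ∈ U := by
    have h1 : ∀ᶠ x in 𝓝 (φ u0), (P.symm x).1 ∈ U := by
      have : ContinuousAt (fun x => (P.symm x).1) (φ u0) := hcs.fst
      exact this.eventually (by beta_reduce; rw [hsymm0]; exact hU.mem_nhds hu0)
    filter_upwards [P.open_target.mem_nhds hz0, hΩ.mem_nhds (hsub u0 hu0), h1] with x a b c
      using ⟨a, b, c⟩
  obtain ⟨R, hR, hNR⟩ := Metric.eventually_nhds_iff_ball.1 hN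
  set τ : EuclideanSpace ℝ ι → ℝ := fun x => (P.symm x).2 with hτ
  have hτc : ∀ x ∈ Metric.ball (φ u0) R, ContinuousAt τ x := fun x hx =>
    (P.symm.continuousAt (hNR x hx).1).snd
  have hτ0 : ∀ x ∈ Metric.ball (φ u0) R, τ x = 0 → F x = 0 ∧ fderiv ℝ F x = 0 := by
    intro x hx hx0
    have h1 : φ (P.symm x).1 = x := by
      rw [← hPφ]
      conv_rhs => rw [← P.right_inv (hNR x hx).1]
      congr 1
      exact Prod.ext rfl hx0.symm
    have h2 := h0 _ (hNR x hx).2.2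
    have h3 := hgrad _ (hNR x hx).2.2
    rw [h1] at h2 h3
    exact ⟨h2, h3⟩
  set F' : EuclideanSpace ℝ ι → V := fun x => if 0 < τ x then F x else 0 with hF'
  set D' : EuclideanSpace ℝ ι → (EuclideanSpace ℝ ι →L[ℝ] V) := fun x => if 0 < τ x then fderiv ℝ F x else 0 with hD'
  have hpos : ∀ x ∈ Metric.ball (φ u0) R, 0 < τ x → ∀ᶠ y in 𝓝 x, 0 < τ y := fun x hx hp =>
    (hτc x hx).eventually (lt_mem_nhds hp)
  have hneg : ∀ x ∈ Metric.ball (φ u0) R, τ x < 0 → ∀ᶠ y in 𝓝 x, ¬ 0 < τ y := fun x hx hp =>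
    ((hτc x hx).eventually (gt_mem_nhds hp)).mono fun y hy => not_lt.2 hy.le
  have hder : ∀ x ∈ Metric.ball (φ u0) R, HasFDerivAt F' (D' x) x := by
    intro x hx
    rcases lt_trichotomy (τ x) 0 with hs | hs | hs
    · have h1 : D' x = 0 := if_neg (not_lt.2 hs.le)
      rw [h1]
      refine (hasFDerivAt_const (0 : V) x).congr_of_eventuallyEq ?_
      filter_upwards [hneg x hx hs] with y hy using if_neg hy
    · have h1 : D' x = 0 := if_neg (by rw [hs]; exact lt_irrefl 0)
      have h2 : F' x = 0 := if_neg (by rw [hs]; exact lt_irrefl 0)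
      obtain ⟨h3, h4⟩ := hτ0 x hx hs
      have h5 := (hFd x (hNR x hx).2.1).hasFDerivAt
      rw [h4, hasFDerivAt_iff_isLittleO] at h5
      rw [h1, hasFDerivAt_iff_isLittleO]
      refine (Asymptotics.isBigO_of_le (𝓝 x) fun y => ?_).trans_isLittleO h5
      rw [h2, h3]
      simp only [sub_zero, zero_apply]
      simp only [hF']
      split_ifs
      · exact le_rfl
      · simp
    · have h1 : D' x = fderiv ℝ F x := if_pos hs
      rw [h1]
      refine (hFd x (hNR x hx).2.1).hasFDerivAt.congr_of_eventuallyEq ?_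
      filter_upwards [hpos x hx hs] with y hy using if_pos hy
  have hDc : ∀ x ∈ Ω, ContinuousAt (fderiv ℝ F) x := fun x hx =>
    ((contDiffOn_succ_iff_fderiv_of_isOpen (n := 0) hΩ).1 (by simpa using hF)).2.2.continuousOn.continuousAt (hΩ.mem_nhds hx)
  have hD'c : ∀ x ∈ Metric.ball (φ u0) R, ContinuousAt D' x := by
    intro x hx
    have hc := hDc x (hNR x hx).2.1
    rcases lt_trichotomy (τ x) 0 with hs | hs | hs
    · refine (continuousAt_const (y := (0 : EuclideanSpace ℝ ι →L[ℝ] V))).congr ?_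
      filter_upwards [hneg x hx hs] with y hy using (if_neg hy).symm
    · have h1 : D' x = 0 := if_neg (by rw [hs]; exact lt_irrefl 0)
      obtain ⟨h3, h4⟩ := hτ0 x hx hs
      rw [ContinuousAt, h1]
      rw [ContinuousAt, h4] at hc
      refine squeeze_zero_norm (fun y => ?_) (by simpa using hc.norm)
      simp only [hD']
      split_ifs
      · exact le_rfl
      · simp
    · refine hc.congr ?_
      filter_upwards [hpos x hx hs] with y hy using (if_pos hy).symm
  have hF'c : ContDiffOn ℝ 1 F' (Metric.ball (φ u0) R) := by
    have := (contDiffOn_succ_iff_fderiv_of_isOpen (𝕜 := ℝ) (n := 0) (f := F') (Metric.isOpen_ball (x := φ u0) (ε := R))).2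
      ⟨fun x hx => (hder x hx).differentiableAt.differentiableWithinAt, by simp, by
        rw [contDiffOn_zero]
        refine ContinuousOn.congr (f := D') (fun x hx => (hD'c x hx).continuousWithinAt) fun x hx => (hder x hx).fderiv⟩
    simpa using this
  have hF'd : ∀ x ∈ Metric.ball (φ u0) R, dir e F' x = 0 := by
    intro x hx
    have h1 := hD x (hNR x hx).2.1
    simp only [dir, (hder x hx).fderiv] at h1 ⊢
    simp only [hD']
    split_ifs
    · exact h1
    · simp
  -- points above and below
  have hpts : ∀ᶠ t : ℝ in 𝓝 0, (u0, t) ∈ P.source ∧ P (u0, t) ∈ Metric.ball (φ u0) R := by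
    have hc : ContinuousAt (fun t : ℝ => (u0, t)) 0 := by fun_prop
    have h1 := hc.eventually (P.open_source.mem_nhds hP0)
    have h2 : ContinuousAt (fun t : ℝ => P (u0, t)) 0 :=
      ContinuousAt.comp (f := fun t : ℝ => (u0, t)) (P.continuousAt hP0) hc
    have h3 := h2.eventually (p := fun x => x ∈ Metric.ball (φ u0) R) (by beta_reduce; rw [hPφ]; exact Metric.ball_mem_nhds _ hR)
    exact h1.and h3
  obtain ⟨δ, hδ, hδP⟩ := Metric.eventually_nhds_iff_ball.1 hpts
  have hup := hδP (δ / 2) (by simp [abs_of_pos hδ, hδ])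
  have hdn := hδP (-(δ / 2)) (by simp [abs_of_pos hδ, hδ])
  have hτup : 0 < τ (P (u0, δ / 2)) := by simp only [hτ, P.left_inv hup.1]; linarith
  have hτdn : τ (P (u0, -(δ / 2))) < 0 := by simp only [hτ, P.left_inv hdn.1]; linarith
  have hz := ucp_ball h hF'c hF'd hdn.2 (by
    filter_upwards [hneg _ hdn.2 hτdn] with y hy using if_neg hy)
  refine ucp h hΩ hcon hF hD (hNR _ hup.2).2.1 ?_
  filter_upwards [hpos _ hup.2 hτup, Metric.isOpen_ball.mem_nhds hup.2] with y hy hyb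
  have := hz y hyb
  simp only [hF', if_pos hy] at this
  exact this

end Core5

section Core6
set_option linter.unusedSectionVars false
open Module

variable {B : Type*} [NormedAddCommGroup B] [NormedSpace ℝ B] [Mul B] [One B] {conj : B → B}

/-- Left multiplication. -/
noncomputable def lmB (H : IsAltStarAlg B conj) (a : B) : B →L[ℝ] B :=
  haveI := H.finDim
  LinearMap.toContinuousLinearMap
    { toFun := fun x => a * x
      map_add' := fun x y => H.mul_add' a x y
      map_smul' := fun r x => H.mul_smul' r a x }

/-- Right multiplication. -/
noncomputable def rmB (H : IsAltStarAlg B conj) (a : B) : B →ₗ[ℝ] B where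
  toFun := fun x => x * a
  map_add' := fun x y => H.add_mul' x y a
  map_smul' := fun r x => H.smul_mul' r x a

lemma lmB_apply (H : IsAltStarAlg B conj) (a x : B) : lmB H a x = a * x := rfl
lemma rmB_apply (H : IsAltStarAlg B conj) (a x : B) : rmB H a x = x * a := rfl

lemma neg_mulB (H : IsAltStarAlg B conj) (a b : B) : -a * b = -(a * b) := by
  rw [← rmB_apply H, map_neg, rmB_apply]

lemma mul_negB (H : IsAltStarAlg B conj) (a b : B) : a * -b = -(a * b) := by
  rw [← lmB_apply H, map_neg, lmB_apply]

lemma zero_mulB (H : IsAltStarAlg B conj) (b : B) : 0 * b = 0 := by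
  rw [← rmB_apply H, map_zero]

lemma alt_lin (H : IsAltStarAlg B conj) (a b x : B) :
    a * (b * x) + b * (a * x) = (a * b + b * a) * x := by
  have h := H.alt_left (a + b) x
  simp only [H.add_mul', H.mul_add', H.alt_left] at h
  rw [H.add_mul']
  have h1 : a * a * x + a * (b * x) + (b * (a * x) + b * b * x) =
      a * a * x + a * b * x + (b * a * x + b * b * x) := by
    first | exact h | (rw [← sub_eq_zero] at h ⊢; rw [← h]; abel)
  have h2 := congrArg (fun z => z - a * a * x - b * b * x) h1
  calc _ = a * a * x + a * (b * x) + (b * (a * x) + b * b * x) - a * a * x - b * b * x := by abel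
    _ = _ := h2
    _ = _ := by abel

lemma cliff_of {ι : Type*} [Fintype ι] [DecidableEq ι] (H : IsAltStarAlg B conj) (c : ι → B) (i0 : ι)
    (h0 : c i0 = 1)
    (hc : ∀ i j, i ≠ i0 → j ≠ i0 → c i * c j + c j * c i = if i = j then (-2 : ℝ) • (1 : B) else 0) :
    Cliff (fun i => lmB H (c i))
      (fun i => if i = i0 then ContinuousLinearMap.id ℝ B else -lmB H (c i)) := by
  intro i j a
  by_cases hi : i = i0
  · subst hi
    by_cases hj : j = i
    · subst hj
      simp [lmB_apply, h0, H.one_mul', two_smul]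
    · simp [lmB_apply, h0, H.one_mul', hj, Ne.symm hj]
  · by_cases hj : j = i0
    · subst hj
      simp [lmB_apply, h0, H.one_mul', hi]
    · simp only [hi, hj, if_false, neg_apply, lmB_apply]
      have := alt_lin H (c i) (c j) a
      rw [hc i j hi hj] at this
      rw [← neg_add, this]
      split_ifs
      · rw [H.smul_mul', H.one_mul', neg_smul, neg_neg]
      · rw [zero_mulB H, neg_zero]

lemma v_sq (H : IsAltStarAlg B conj) {v : ℕ → B} {m : ℕ} (hv : IsHypBasis B conj v m) {s : ℕ}
    (h1 : 1 ≤ s) (h2 : s ≤ m) : v s * v s = -1 := by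
  have h3 := eq_neg_of_add_eq_zero_right (hv.trace_zero s h1 h2)
  have h4 := hv.norm_one s h1 h2
  rw [h3, mul_negB H] at h4
  rw [← h4, neg_neg]

lemma v_anti (H : IsAltStarAlg B conj) {v : ℕ → B} {m : ℕ} (hv : IsHypBasis B conj v m) {s t : ℕ}
    (h1 : 1 ≤ s) (h2 : s ≤ m) (h3 : 1 ≤ t) (h4 : t ≤ m) :
    v s * v t + v t * v s = if s = t then (-2 : ℝ) • (1 : B) else 0 := by
  split_ifs with h
  · subst h
    rw [v_sq H hv h1 h2, neg_smul, two_smul]; abel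
  · rw [hv.anticomm s t h1 h2 h3 h4 h]; simp

lemma emb_anti (H : IsAltStarAlg B conj) {v : ℕ → B} {m p : ℕ} (hv : IsHypBasis B conj v m)
    {w : Fin (m + 1) → ℝ} (hw : ∀ s : Fin (m + 1), (s : ℕ) ≤ p → w s = 0) {s : ℕ}
    (h1 : 1 ≤ s) (h2 : s ≤ p) (h3 : s ≤ m) : v s * emb v m w + emb v m w * v s = 0 := by
  unfold emb
  rw [← lmB_apply H, ← rmB_apply H, map_sum, map_sum, ← Finset.sum_add_distrib]
  refine Finset.sum_eq_zero fun t _ => ?_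
  by_cases ht : (t : ℕ) ≤ p
  · simp [hw t ht]
  · rw [map_smul, map_smul, lmB_apply, rmB_apply, ← smul_add,
      v_anti H hv h1 h3 (by omega) (by omega), if_neg (by omega), smul_zero]

lemma emb_sq (H : IsAltStarAlg B conj) {v : ℕ → B} {m p : ℕ} (hv : IsHypBasis B conj v m)
    {w : Fin (m + 1) → ℝ} (hw : ∀ s : Fin (m + 1), (s : ℕ) ≤ p → w s = 0) :
    emb v m w * emb v m w = -((∑ s, w s ^ 2) • (1 : B)) := by
  have hX : emb v m w * emb v m w = ∑ s, ∑ t, (w s * w t) • (v s * v t) := by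
    have hl : ∀ y, emb v m w * y = ∑ s, w s • (v s * y) := by
      intro y
      rw [← rmB_apply H]
      simp only [emb, map_sum, map_smul, rmB_apply]
    have hr : ∀ y, y * emb v m w = ∑ s, w s • (y * v s) := by
      intro y
      rw [← lmB_apply H]
      simp only [emb, map_sum, map_smul, lmB_apply]
    rw [hl]
    refine Finset.sum_congr rfl fun s _ => ?_
    rw [hr, Finset.smul_sum]
    simp only [smul_smul]
  have hX2 : emb v m w * emb v m w = ∑ s, ∑ t, (w s * w t) • (v t * v s) := by
    rw [hX, Finset.sum_comm]
    refine Finset.sum_congr rfl fun s _ => Finset.sum_congr rfl fun t _ => ?_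
    rw [mul_comm]
  have h2 : emb v m w * emb v m w + emb v m w * emb v m w = (-2 : ℝ) • ((∑ s, w s ^ 2) • (1 : B)) := by
    refine (congrArg₂ (· + ·) hX hX2).trans ?_
    beta_reduce
    rw [← Finset.sum_add_distrib, Finset.sum_smul, Finset.smul_sum]
    refine Finset.sum_congr rfl fun s _ => ?_
    rw [← Finset.sum_add_distrib, Finset.sum_eq_single s]
    · by_cases hs : (s : ℕ) ≤ p
      · simp [hw s hs]
      · rw [← smul_add, v_anti H hv (by omega) (by omega) (by omega) (by omega), if_pos rfl,
          smul_comm, sq]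
    · intro t _ hts
      by_cases hs : (s : ℕ) ≤ p
      · simp [hw s hs]
      by_cases ht : (t : ℕ) ≤ p
      · simp [hw t ht]
      rw [← smul_add, v_anti H hv (by omega) (by omega) (by omega) (by omega), if_neg, smul_zero]
      intro h
      exact hts (Fin.ext h.symm)
    · simp
  rw [← two_smul ℝ, neg_smul, ← smul_neg] at h2
  exact smul_right_injective B (two_ne_zero (α := ℝ)) h2

/-- Coordinates of the slice. -/
noncomputable def sliceL (p : ℕ) :
    EuclideanSpace ℝ (Option (Fin (p + 1))) ≃L[ℝ] (Fin (p + 1) → ℝ) × ℝ :=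
  LinearEquiv.toContinuousLinearEquiv
    { toFun := fun x => (fun s => x (some s), x none)
      map_add' := fun x y => rfl
      map_smul' := fun r x => rfl
      invFun := fun z => WithLp.toLp 2 fun o => o.elim z.2 z.1
      left_inv := fun x => by
        ext o
        cases o <;> rfl
      right_inv := fun z => rfl }

lemma sliceL_some (p : ℕ) (s : Fin (p + 1)) :
    sliceL p (EuclideanSpace.single (some s) 1) = (Pi.single s 1, 0) := by
  change ((fun t => (EuclideanSpace.single (some s) (1:ℝ) : EuclideanSpace ℝ (Option (Fin (p+1)))) (some t)), _) = _
  ext t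
  · simp [Pi.single_apply]
  · change (EuclideanSpace.single (some s) (1:ℝ) : EuclideanSpace ℝ (Option (Fin (p+1)))) none = 0
    simp

lemma sliceL_none (p : ℕ) :
    sliceL p (EuclideanSpace.single none 1) = (0, 1) := by
  change ((fun t => (EuclideanSpace.single none (1:ℝ) : EuclideanSpace ℝ (Option (Fin (p+1)))) (some t)), _) = _
  ext t
  · simp
  · change (EuclideanSpace.single none (1:ℝ) : EuclideanSpace ℝ (Option (Fin (p+1)))) none = 1
    simp

lemma slice_unique (H : IsAltStarAlg B conj) {v : ℕ → B} {m p : ℕ} (hv : IsHypBasis B conj v m)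
    (hp : p < m) {w : Fin (m + 1) → ℝ} (hw : w ∈ Sph v m p)
    {G : (Fin (p + 1) → ℝ) × ℝ → B} {S : Set ((Fin (p + 1) → ℝ) × ℝ)} (hS : IsOpen S)
    (hSc : IsPreconnected S) (hG : ContDiffOn ℝ 1 G S) (hGD : ∀ z ∈ S, DomCR v m p w G z = 0)
    {U : Set (Fin (p + 1) → ℝ)} {φ : (Fin (p + 1) → ℝ) → (Fin (p + 1) → ℝ) × ℝ}
    (hU : IsOpen U) (hUne : U.Nonempty) (hφ : ContDiffOn ℝ 1 φ U)
    (himm : ∀ u ∈ U, Function.Injective (fderiv ℝ φ u))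
    (hsub : ∀ u ∈ U, φ u ∈ S) (h0 : ∀ u ∈ U, G (φ u) = 0) : ∀ z ∈ S, G z = 0 := by
  haveI := H.finDim
  set c : Option (Fin (p + 1)) → B := fun o => o.elim (emb v m w) (fun s => v s) with hc
  have hcl := cliff_of H c (some 0) (by simp [hc, hv.v_zero]) (by
    rintro (_ | i) (_ | j) hi hj
    · have := hw.2
      simp only [hc, Option.elim, this, if_true, neg_smul, two_smul]
      abel
    · have hj0 : (j : ℕ) ≠ 0 := fun h => hj (by rw [Fin.ext (by simpa using h) (a := j) (b := 0)])
      have := emb_anti H hv hw.1 (s := j) (by omega) (by omega) (by omega)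
      rw [add_comm] at this
      simpa [hc] using this
    · have hj0 : (i : ℕ) ≠ 0 := fun h => hi (by rw [Fin.ext (by simpa using h) (a := i) (b := 0)])
      have := emb_anti H hv hw.1 (s := i) (by omega) (by omega) (by omega)
      simpa [hc] using this
    · have hi0 : (i : ℕ) ≠ 0 := fun h => hi (by rw [Fin.ext (by simpa using h) (a := i) (b := 0)])
      have hj0 : (j : ℕ) ≠ 0 := fun h => hj (by rw [Fin.ext (by simpa using h) (a := j) (b := 0)])
      have := v_anti H hv (s := i) (t := j) (by omega) (by omega) (by omega) (by omega)
      simpa [hc, Fin.ext_iff] using this)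
  have key := hyp_lemma hcl (F := G ∘ sliceL p) (Ω := sliceL p ⁻¹' S)
    (hS.preimage (sliceL p).continuous)
    ((sliceL p).toHomeomorph.isPreconnected_preimage.2 hSc)
    (hG.comp (sliceL p).contDiff.contDiffOn (Set.mapsTo_preimage _ _))
    (fun x hx => by
      have h1 := hGD _ hx
      simp only [dir, ContinuousLinearEquiv.comp_right_fderiv, ContinuousLinearMap.comp_apply,
        ContinuousLinearEquiv.coe_coe, Fintype.sum_option, sliceL_some, sliceL_none, lmB_apply]
      simp only [DomCR, DopSx, pdSx, pdSr] at h1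
      rw [add_comm]
      exact h1)
    (W := Fin (p + 1) → ℝ) (by simp) hU hUne (φ := (sliceL p).symm ∘ φ)
    ((sliceL p).symm.contDiff.comp_contDiffOn hφ)
    (fun u hu => by
      rw [ContinuousLinearEquiv.comp_fderiv]
      exact (sliceL p).symm.injective.comp (himm u hu))
    (fun u hu => by simpa using hsub u hu) (fun u hu => by simpa using h0 u hu)
  intro z hz
  simpa using key ((sliceL p).symm z) (by simpa using hz)

lemma pt_cont (m p : ℕ) (w : Fin (m + 1) → ℝ) :
    Continuous fun z : (Fin (p + 1) → ℝ) × ℝ => pt m p w z.1 z.2 := by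
  unfold pt injP
  refine continuous_pi fun s => ?_
  simp only [Pi.add_apply, Pi.smul_apply, smul_eq_mul]
  split_ifs <;> fun_prop

lemma DomCR_sub (H : IsAltStarAlg B conj) (v : ℕ → B) (m p : ℕ) (w : Fin (m + 1) → ℝ)
    {F G : (Fin (p + 1) → ℝ) × ℝ → B} {z : (Fin (p + 1) → ℝ) × ℝ}
    (hF : DifferentiableAt ℝ F z) (hG : DifferentiableAt ℝ G z) :
    DomCR v m p w (fun z => F z - G z) z = DomCR v m p w F z - DomCR v m p w G z := by
  simp only [DomCR, DopSx, pdSx, pdSr, fderiv_fun_sub hF hG, sub_apply]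
  simp only [← lmB_apply H, map_sub, Finset.sum_sub_distrib]
  abel

lemma slice_eq (H : IsAltStarAlg B conj) {v : ℕ → B} {m p : ℕ} (hv : IsHypBasis B conj v m)
    (hp : p < m) {Ω : Set (Fin (m + 1) → ℝ)} (hΩ : SliceDomain v m p Ω)
    {f g : (Fin (m + 1) → ℝ) → B} (hf : GSM v m p f Ω) (hg : GSM v m p g Ω)
    {w : Fin (m + 1) → ℝ} (hw : w ∈ Sph v m p)
    {U : Set (Fin (p + 1) → ℝ)} {φ : (Fin (p + 1) → ℝ) → (Fin (p + 1) → ℝ) × ℝ}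
    (hU : IsOpen U) (hUne : U.Nonempty) (hφ : ContDiffOn ℝ 1 φ U)
    (himm : ∀ u ∈ U, Function.Injective (fderiv ℝ φ u))
    (hsub : ∀ u ∈ U, φ u ∈ sliceSet m p Ω w)
    (heq : ∀ u ∈ U, f (pt m p w (φ u).1 (φ u).2) = g (pt m p w (φ u).1 (φ u).2)) :
    ∀ z ∈ sliceSet m p Ω w, f (pt m p w z.1 z.2) = g (pt m p w z.1 z.2) := by
  have hS : IsOpen (sliceSet m p Ω w) := hΩ.1.preimage (pt_cont m p w)
  intro z hz
  refine sub_eq_zero.1 (slice_unique H hv hp hw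
    (G := fun z => sliceFun m p f w z - sliceFun m p g w z) hS
    (hΩ.2.2.2 w hw).isPreconnected ((hf w hw).1.sub (hg w hw).1) (fun z hz => ?_) hU hUne hφ himm hsub
    (fun u hu => sub_eq_zero.2 (heq u hu)) z hz)
  rw [DomCR_sub H, (hf w hw).2 z hz, (hg w hw).2 z hz, sub_zero]
  · exact ((hf w hw).1.contDiffAt (hS.mem_nhds hz)).differentiableAt (by simp)
  · exact ((hg w hw).1.contDiffAt (hS.mem_nhds hz)).differentiableAt (by simp)

lemma injP_projP {m p : ℕ} (hp : p < m) {x : Fin (m + 1) → ℝ} :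
    injP m p (projP m p x) + xqpart m p x = x := by
  ext s
  simp only [Pi.add_apply, injP, projP, xqpart]
  by_cases h : (s : ℕ) ≤ p
  · rw [dif_pos (by omega), dif_pos (by omega), if_pos h, add_zero]
  · rw [dif_neg (by omega), if_neg h, zero_add]

lemma rad_smul_normq {m p : ℕ} {x : Fin (m + 1) → ℝ} (h : rad m p x ≠ 0) :
    rad m p x • normq m p x = xqpart m p x := by
  rw [normq, smul_smul, mul_inv_cancel₀ h, one_smul]

lemma rad_sq (m p : ℕ) (x : Fin (m + 1) → ℝ) : rad m p x ^ 2 = ∑ s, xqpart m p x s ^ 2 :=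
  Real.sq_sqrt (Finset.sum_nonneg fun _ _ => sq_nonneg _)

lemma normq_mem (H : IsAltStarAlg B conj) {v : ℕ → B} {m p : ℕ} (hv : IsHypBasis B conj v m)
    {x : Fin (m + 1) → ℝ} (h : rad m p x ≠ 0) : normq m p x ∈ Sph v m p := by
  have h1 : ∀ s : Fin (m + 1), (s : ℕ) ≤ p → normq m p x s = 0 := by
    intro s hs
    simp [normq, xqpart, hs]
  refine ⟨h1, ?_⟩
  rw [emb_sq H hv h1]
  have : ∑ s, normq m p x s ^ 2 = 1 := by
    simp only [normq, Pi.smul_apply, smul_eq_mul, mul_pow]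
    rw [← Finset.mul_sum, ← rad_sq]
    field_simp
  rw [this, one_smul]

lemma xqpart_zero {m p : ℕ} {x : Fin (m + 1) → ℝ} (h : rad m p x = 0) : xqpart m p x = 0 := by
  have h1 := rad_sq m p x
  rw [h] at h1
  ext s
  have := (Finset.sum_eq_zero_iff_of_nonneg (fun s _ => sq_nonneg (xqpart m p x s))).1
    (by rw [← h1]; simp) s (Finset.mem_univ s)
  simpa using this

end Core6

/-- **Identity theorem.** If two left generalized partial-slice monogenic functions
on a slice domain `Ω` agree on a `(p+1)`-dimensional smooth submanifold contained in
some slice `Ω_ω`, then they agree on all of `Ω`. -/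
theorem identity_theorem
    {A : Type*} [NormedAddCommGroup A] [NormedSpace ℝ A] [Mul A] [One A]
    (conj : A → A) (H : IsAltStarAlg A conj)
    (v : ℕ → A) (m p : ℕ) (hv : IsHypBasis A conj v m) (hp : p < m)
    (Ω : Set (Fin (m + 1) → ℝ)) (hΩ : SliceDomain v m p Ω)
    (f g : (Fin (m + 1) → ℝ) → A)
    (hf : GSM v m p f Ω) (hg : GSM v m p g Ω)
    (w : Fin (m + 1) → ℝ) (hw : w ∈ Sph v m p)
    -- a (p+1)-dimensional smooth submanifold of the slice `Ω_ω`, given by a smooth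
    -- injective immersion `φ` of a nonempty open set `U ⊆ ℝ^{p+1}`:
    (U : Set (Fin (p + 1) → ℝ)) (φ : (Fin (p + 1) → ℝ) → (Fin (p + 1) → ℝ) × ℝ)
    (hU : IsOpen U) (hUne : U.Nonempty)
    (hφ : ContDiffOn ℝ (⊤ : ℕ∞) φ U) (hφinj : Set.InjOn φ U)
    (himm : ∀ u ∈ U, Function.Injective (fderiv ℝ φ u))
    (hsub : φ '' U ⊆ sliceSet m p Ω w)
    -- `f = g` on the submanifold:
    (heq : ∀ u ∈ U, f (pt m p w (φ u).1 (φ u).2) = g (pt m p w (φ u).1 (φ u).2)) :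
    Set.EqOn f g Ω := by
  have h1 := slice_eq H hv hp hΩ hf hg hw hU hUne
    (hφ.of_le (by exact_mod_cast le_top)) himm
    (fun u hu => hsub ⟨u, hu, rfl⟩) heq
  have hpt0 : ∀ (w' : Fin (m + 1) → ℝ) (y : Fin (p + 1) → ℝ), pt m p w' y 0 = injP m p y := by
    intro w' y
    simp [pt]
  obtain ⟨x1, hx1, hx1q⟩ := hΩ.2.2.1
  have hx1' : injP m p (projP m p x1) = x1 := by
    have := injP_projP hp (x := x1)
    rwa [hx1q, add_zero] at this
  have h2 : ∀ w' ∈ Sph v m p, ∀ z ∈ sliceSet m p Ω w',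
      f (pt m p w' z.1 z.2) = g (pt m p w' z.1 z.2) := by
    intro w' hw'
    have hfd : ∀ u : Fin (p + 1) → ℝ, HasFDerivAt (fun y : Fin (p + 1) → ℝ => (y, (0 : ℝ)))
        (ContinuousLinearMap.inl ℝ (Fin (p + 1) → ℝ) ℝ) u := fun u =>
      (ContinuousLinearMap.inl ℝ (Fin (p + 1) → ℝ) ℝ).hasFDerivAt
    refine slice_eq H hv hp hΩ hf hg hw' (U := {y | pt m p w' y 0 ∈ Ω}) (φ := fun y => (y, 0))
      ?_ ⟨projP m p x1, ?_⟩ ?_ ?_ (fun u hu => hu) ?_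
    · exact hΩ.1.preimage ((pt_cont m p w').comp (by fun_prop : Continuous fun y : Fin (p + 1) → ℝ => (y, (0 : ℝ))))
    · change pt m p w' (projP m p x1) 0 ∈ Ω
      rw [hpt0, hx1']
      exact hx1
    · fun_prop
    · intro u _
      rw [(hfd u).fderiv]
      intro a b hab
      exact (Prod.ext_iff.1 hab).1
    · intro u hu
      change f (pt m p w' u 0) = g (pt m p w' u 0)
      have hu' : (u, (0 : ℝ)) ∈ sliceSet m p Ω w := by
        change pt m p w u 0 ∈ Ω
        have : pt m p w' u 0 ∈ Ω := hu
        rwa [hpt0] at this ⊢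
      have := h1 _ hu'
      simpa only [hpt0] using this
  intro x hx
  by_cases hr : rad m p x = 0
  · have hx' : pt m p w (projP m p x) 0 = x := by
      have := injP_projP hp (x := x)
      rw [xqpart_zero hr, add_zero] at this
      rw [hpt0, this]
    have := h1 (projP m p x, 0) (by change pt m p w (projP m p x) 0 ∈ Ω; rwa [hx'])
    simpa only [hx'] using this
  · have hx' : pt m p (normq m p x) (projP m p x) (rad m p x) = x := by
      rw [pt, rad_smul_normq hr, injP_projP hp]
    have := h2 _ (normq_mem H hv hr) (projP m p x, rad m p x)
      (by change pt m p (normq m p x) (projP m p x) (rad m p x) ∈ Ω; rwa [hx'])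
    simpa only [hx'] using this

end GPSM
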